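/- arXiv:1403.5917 — 7 statements merged into one kernel-verified Lean document; each statement's English description precedes it below -/
import Mathlib

section
/- Let k be a field, 𝒜 an abelian category with enough projectives, and F : 𝒜 → Vect_k an additive functor into the category of k-vector spaces, with left derived functors L_p F (p ≥ 0). Call an object X of 𝒜 homologically finite if L_p F(X) is finite-dimensional over k for every p ≥ 0, and i-homologically finite if L_p F(X) is finite-dimensional for every 0 ≤ p ≤ i. Let C : 0 → C_{n−1} → ⋯ → C_1 → C_0 → 0 be a bounded chain complex in 𝒜 all of whose terms C_j are homologically finite. Fix i ≥ 0 and assume that the homology object H_j(C) is i-homologically finite for every j > 0. Then H_0(C) is (i+2)-homologically finite. -/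
/-!
Write `Z_j` and `B_j` for the cycles and boundaries of `C`. The long exact sequences of left derived
functors of `0 → B_j → Z_j → H_j → 0` and `0 → Z_{j+1} → C_{j+1} → B_j → 0` show that `B_j` is
`(i+1)`-homologically finite for every `j`: if `B_{j+1}` is, then `Z_{j+1}` is `i`-homologically
finite because `H_{j+1}` is, and the connecting map to `L_{p-1} F Z_{j+1}` gains one degree for
`B_j`. The sequence `0 → B_0 → C_0 → H_0 → 0` gains one more degree for `H_0`.

The long exact sequence (`exists_shortExact`) is derived from a version of the horseshoe lemma
(`exists_resolutions`); `finite_middle` and `finite_right` are its consequences for finiteness.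
-/

open CategoryTheory CategoryTheory.Limits

namespace HomologicallyFinite
universe v u
variable {A : Type u} [Category.{v} A] [Abelian A]

open HomologicalComplex in
/-- The cone of the identity of `P` is contractible; in degree `n` it is `P_{n-1} ⊞ P_n`, with
differential `(a, b) ↦ (-da, a + db)`, and the null-homotopy is `(a, b) ↦ (b, 0)`. -/
noncomputable def coneIdHomotopy (P : ChainComplex A ℕ) :
    Homotopy (𝟙 (homotopyCofiber (𝟙 P))) 0 where
  hom i j := if h : (ComplexShape.down ℕ).Rel j i then
    homotopyCofiber.sndX (𝟙 P) i ≫ homotopyCofiber.inlX (𝟙 P) i j h else 0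
  zero i j h := dif_neg h
  comm i := by
    have h1 : (ComplexShape.down ℕ).Rel (i + 1) i := rfl
    rw [prevD_eq _ h1, dif_pos h1]
    cases i with
    | zero =>
      rw [dNext_eq_zero _ _ (by simp)]
      refine homotopyCofiber.ext_from_X' (𝟙 P) 0 (by simp) ?_
      have := homotopyCofiber.inlX_d' (𝟙 P) 1 0 rfl (by simp)
      simp at this
      simp [this]
    | succ i =>
      have h2 : (ComplexShape.down ℕ).Rel (i + 1) i := rfl
      rw [dNext_eq _ h2, dif_pos h2]
      have := homotopyCofiber.inlX_d (𝟙 P) (i+2) (i+1) i rfl rfl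
      have h3 := homotopyCofiber.d_sndX (𝟙 P) (i+1) i rfl
      simp at this h3
      refine homotopyCofiber.ext_from_X (𝟙 P) i (i+1) h2 ?_ ?_
      · simp [this, reassoc_of% h3]
      · have h4 := homotopyCofiber.inrX_fstX (𝟙 P) (i + 1) i h2
        simp [this, reassoc_of% h3, reassoc_of% h4]

lemma projective_cone (P : ChainComplex A ℕ) [∀ n, Projective (P.X n)] (n : ℕ) :
    Projective ((HomologicalComplex.homotopyCofiber (𝟙 P)).X n) := by
  cases n with
  | zero => exact Projective.of_iso (HomologicalComplex.homotopyCofiber.XIso (𝟙 P) 0 (by simp)).symm inferInstance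
  | succ n => exact Projective.of_iso (HomologicalComplex.homotopyCofiber.XIsoBiprod (𝟙 P) (n+1) n rfl).symm inferInstance

/-- The sequence `0 → B_j → Z_j → H_j → 0` is exact. -/
lemma shortExact_boundaries (C : ChainComplex A ℕ) (j : ℕ) :
    (ShortComplex.mk (kernel.ι (C.homologyπ j)) (C.homologyπ j) (by simp)).ShortExact where
  exact := ShortComplex.exact_kernel _

/-- The differential `C_{j+1} → B_j`, where the boundaries `B_j` are encoded as the kernel of
`Z_j → H_j`. -/
noncomputable def toBoundaries (C : ChainComplex A ℕ) (j : ℕ) :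
    C.X (j + 1) ⟶ kernel (C.homologyπ j) :=
  kernel.lift _ (C.toCycles (j + 1) j) (by simp)

/-- The sequence `0 → Z_{j+1} → C_{j+1} → B_j → 0` is exact. -/
lemma shortExact_cycles (C : ChainComplex A ℕ) (j : ℕ) :
    (ShortComplex.mk (C.iCycles (j + 1)) (toBoundaries C j) (by
      rw [← cancel_mono (kernel.ι (C.homologyπ j)), ← cancel_mono (C.iCycles j)]
      simp [toBoundaries])).ShortExact where
  exact := by
    apply ShortComplex.exact_of_f_is_kernel
    refine KernelFork.IsLimit.ofι' _ _ fun g hg =>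
      ⟨C.liftCycles g j (by simp) ?_, C.liftCycles_i _ _ _ _⟩
    have : C.d (j + 1) j = toBoundaries C j ≫ kernel.ι _ ≫ C.iCycles j := by
      simp [toBoundaries]
    rw [this, reassoc_of% hg, zero_comp]
  epi_g := by
    have h : (ShortComplex.mk (C.toCycles (j + 1) j) (C.homologyπ j) (by simp)).Exact :=
      ShortComplex.exact_of_g_is_cokernel _ (C.homologyIsCokernel (j + 1) j (by simp))
    exact h.epi_kernelLift

variable [EnoughProjectives A]

open HomologicalComplex in
/-- A form of the horseshoe lemma: a short exact sequence `S` is resolved by a degreewise split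
sequence `P → Q → R` of projective resolutions. Take a lift `φ : P → Q₀` of `S.f`, replace `Q₀`
by `Q = Q₀ ⊞ cone(𝟙 P)`, into which `(φ, inr)` is a degreewise split monomorphism, and let `R` be
the cokernel; it resolves `S.X₃` by the five lemma in the long exact homology sequence. -/
lemma exists_resolutions (S : ShortComplex A) (hS : S.ShortExact) :
    ∃ (T : ShortComplex (ChainComplex A ℕ)) (P : ProjectiveResolution S.X₁)
      (Q : ProjectiveResolution S.X₂) (R : ProjectiveResolution S.X₃),
      P.complex = T.X₁ ∧ Q.complex = T.X₂ ∧ R.complex = T.X₃ ∧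
      ∀ n, Nonempty (T.map (eval A _ n)).Splitting := by
  let P := projectiveResolution S.X₁
  let Q₀ := projectiveResolution S.X₂
  let φ := ProjectiveResolution.lift S.f P Q₀
  let E := homotopyCofiber (𝟙 P.complex)
  let j : P.complex ⟶ Q₀.complex ⊞ E := biprod.lift φ (homotopyCofiber.inr (𝟙 P.complex))
  have hr : ∀ n, j.f n ≫ ((biprod.snd : Q₀.complex ⊞ E ⟶ E).f n ≫
      homotopyCofiber.sndX (𝟙 P.complex) n) = 𝟙 _ := by
    intro n
    have : j ≫ biprod.snd = homotopyCofiber.inr (𝟙 P.complex) := biprod.lift_snd _ _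
    have h2 := congr_hom this n
    rw [comp_f] at h2
    rw [reassoc_of% h2]
    simp [homotopyCofiber.inr]
  have : Mono j := mono_of_mono_f _ fun n => mono_of_mono_fac (hr n)
  let T : ShortComplex (ChainComplex A ℕ) := ShortComplex.mk j (cokernel.π j) (by simp)
  have hT : T.ShortExact := { exact := ShortComplex.exact_cokernel j }
  have spl : ∀ n, (T.map (eval A _ n)).Splitting := fun n =>
    ShortComplex.Splitting.ofExactOfRetraction _ (hT.exact.map (eval A _ n)) _ (hr n)
      ((hT.map_of_exact (eval A _ n)).epi_g)
  let π₂ : T.X₂ ⟶ (ChainComplex.single₀ A).obj S.X₂ := biprod.fst ≫ Q₀.π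
  have hE : QuasiIso (biprod.fst : Q₀.complex ⊞ E ⟶ Q₀.complex) := by
    let e : HomotopyEquiv (Q₀.complex ⊞ E) Q₀.complex :=
      { hom := biprod.fst
        inv := biprod.inl
        homotopyHomInvId := by
          have h := (((coneIdHomotopy P.complex).compLeft (biprod.snd : Q₀.complex ⊞ E ⟶ E)).compRight
            (biprod.inr : E ⟶ Q₀.complex ⊞ E)).symm
          have h' := (Homotopy.refl (biprod.fst ≫ biprod.inl : Q₀.complex ⊞ E ⟶ Q₀.complex ⊞ E)).add h
          exact (Homotopy.ofEq (by simp)).trans (h'.trans (Homotopy.ofEq (by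
            erw [Category.comp_id]; exact biprod.total)))
        homotopyInvHomId := Homotopy.ofEq (by simp) }
    exact e.quasiIso_hom
  have hπ₂ : QuasiIso π₂ := by dsimp [π₂]; infer_instance
  have w : j ≫ π₂ = P.π ≫ (ChainComplex.single₀ A).map S.f := by
    simp only [j, π₂, biprod.lift_fst_assoc]
    exact ProjectiveResolution.lift_commutes _ _ _
  let U := S.map (ChainComplex.single₀ A)
  have hU : U.ShortExact := hS.map_of_exact _
  let π₃ : T.X₃ ⟶ (ChainComplex.single₀ A).obj S.X₃ :=
    cokernel.desc j (π₂ ≫ (ChainComplex.single₀ A).map S.g) (by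
      rw [reassoc_of% w, ← Functor.map_comp, S.zero]; simp)
  let Φ : T ⟶ U :=
    { τ₁ := P.π
      τ₂ := π₂
      τ₃ := π₃
      comm₁₂ := w.symm
      comm₂₃ := (cokernel.π_desc _ _ _).symm }
  have hπ₃ : QuasiIso π₃ := HomologySequence.quasiIso_τ₃ Φ hT hU P.quasiIso hπ₂
  have hQ : ∀ n, Projective (T.X₂.X n) := fun n => by
    have := projective_cone P.complex n
    exact Projective.of_iso (biprodXIso Q₀.complex E n).symm inferInstance
  have hR : ∀ n, Projective (T.X₃.X n) := fun n =>
    have : Projective (T.map (eval A _ n)).X₂ := hQ n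
    Retract.projective ⟨(spl n).s, (T.map (eval A _ n)).g, (spl n).s_g⟩
  exact ⟨T, P, ⟨T.X₂, hQ, π₂, hπ₂⟩, ⟨T.X₃, hR, π₃, hπ₃⟩, rfl, rfl, rfl, fun n => ⟨spl n⟩⟩

variable {B : Type*} [Category* B] [Abelian B] 

/-- The long exact sequence of left derived functors, in the form of a short exact sequence of
complexes whose homology objects are the values of the `L_p F`. -/
lemma exists_shortExact (F : A ⥤ B) [F.Additive] (S : ShortComplex A) (hS : S.ShortExact) :
    ∃ T : ShortComplex (ChainComplex B ℕ), T.ShortExact ∧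
      (∀ p, Nonempty ((F.leftDerived p).obj S.X₁ ≅ T.X₁.homology p)) ∧
      (∀ p, Nonempty ((F.leftDerived p).obj S.X₂ ≅ T.X₂.homology p)) ∧
      (∀ p, Nonempty ((F.leftDerived p).obj S.X₃ ≅ T.X₃.homology p)) := by
  obtain ⟨T, P, Q, R, hP, hQ, hR, hs⟩ := exists_resolutions S hS
  refine ⟨T.map (F.mapHomologicalComplex _), ?_, fun p => ⟨?_⟩, fun p => ⟨?_⟩, fun p => ⟨?_⟩⟩
  · exact HomologicalComplex.shortExact_of_degreewise_shortExact _ fun n =>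
      ((hs n).some.map F).shortExact
  · rw [ShortComplex.map_X₁, ← hP]; exact P.isoLeftDerivedObj F p
  · rw [ShortComplex.map_X₂, ← hQ]; exact Q.isoLeftDerivedObj F p
  · rw [ShortComplex.map_X₃, ← hR]; exact R.isoLeftDerivedObj F p

section
variable {k : Type} [Field k] 

lemma finite_of_exact {S : ShortComplex (ModuleCat k)} (hS : S.Exact)
    (h₁ : Module.Finite k S.X₁) (h₃ : Module.Finite k S.X₃) : Module.Finite k S.X₂ := by
  have hfg := (ShortComplex.ShortExact.moduleCat_exact_iff_function_exact S).1 hS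
  refine Module.Finite.of_exact (f := S.f.hom) (g := S.g.hom.rangeRestrict) (fun x => ?_)
    S.g.hom.surjective_rangeRestrict
  rw [← hfg x, Subtype.ext_iff]
  rfl

lemma finite_iff {X Y : ModuleCat k} (e : X ≅ Y) : Module.Finite k X ↔ Module.Finite k Y :=
  Module.Finite.equiv_iff e.toLinearEquiv

variable (F : A ⥤ ModuleCat k) [F.Additive] {S : ShortComplex A}

lemma finite_middle (hS : S.ShortExact) (p : ℕ) (h₁ : Module.Finite k ((F.leftDerived p).obj S.X₁))
    (h₃ : Module.Finite k ((F.leftDerived p).obj S.X₃)) :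
    Module.Finite k ((F.leftDerived p).obj S.X₂) := by
  obtain ⟨T, hT, e₁, e₂, e₃⟩ := exists_shortExact F S hS
  rw [finite_iff (e₁ p).some] at h₁
  rw [finite_iff (e₃ p).some] at h₃
  rw [finite_iff (e₂ p).some]
  exact finite_of_exact (hT.homology_exact₂ p) h₁ h₃

/-- From `L_p F X₂ → L_p F X₃ → L_{p-1} F X₁`; for `p = 0` the condition on `X₁` is void, since
`L_0 F` preserves epimorphisms. -/
lemma finite_right (hS : S.ShortExact) (p : ℕ) (h₂ : Module.Finite k ((F.leftDerived p).obj S.X₂))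
    (h₁ : ∀ q, q + 1 = p → Module.Finite k ((F.leftDerived q).obj S.X₁)) :
    Module.Finite k ((F.leftDerived p).obj S.X₃) := by
  obtain ⟨T, hT, e₁, e₂, e₃⟩ := exists_shortExact F S hS
  rw [finite_iff (e₂ p).some] at h₂
  rw [finite_iff (e₃ p).some]
  cases p with
  | zero =>
    have := hT.epi_g
    have hepi := HomologicalComplex.epi_homologyMap_of_epi_of_not_rel T.g 0 (by simp)
    exact Module.Finite.of_surjective _ ((ModuleCat.epi_iff_surjective _).1 hepi)
  | succ q =>
    have h₁ := h₁ q rfl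
    rw [finite_iff (e₁ q).some] at h₁
    exact finite_of_exact (hT.homology_exact₃ (q + 1) q rfl) h₂ h₁
end

end HomologicallyFinite
open HomologicallyFinite

/-- Let `𝒜` be an abelian category with enough projectives, `F : 𝒜 ⥤ Vect_k` an
additive functor with left derived functors `L_p F`.  Call `X` *homologically finite*
if `L_p F X` is finite-dimensional for all `p`, and *`i`-homologically finite* if
`L_p F X` is finite-dimensional for all `p ≤ i`.  Let
`C : 0 → C_{n-1} → ⋯ → C_0 → 0` be a bounded chain complex whose terms are all
homologically finite, and suppose `H_j(C)` is `i`-homologically finite for all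
`j > 0`.  Then `H_0(C)` is `(i+2)`-homologically finite. -/
theorem homology_zero_homologically_finite
    {k : Type} [Field k]
    {A : Type*} [Category A] [Abelian A] [EnoughProjectives A]
    (F : A ⥤ ModuleCat k) [F.Additive]
    (C : ChainComplex A ℕ) (n : ℕ)
    (hbounded : ∀ j, n ≤ j → IsZero (C.X j))
    (hterms : ∀ (j p : ℕ), FiniteDimensional k ((F.leftDerived p).obj (C.X j)))
    (i : ℕ)
    (hhom : ∀ j, 0 < j → ∀ p ≤ i,
      FiniteDimensional k ((F.leftDerived p).obj (C.homology j))) :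
    ∀ p ≤ i + 2, FiniteDimensional k ((F.leftDerived p).obj (C.homology 0)) := by
  -- The boundaries `B_j` are `(i+1)`-homologically finite, by descending induction on `j`
  -- (ascending on `m`), starting from the range where `C_j = 0`.
  have hB : ∀ m j, n ≤ j + m → ∀ p ≤ i + 1,
      Module.Finite k ((F.leftDerived p).obj (kernel (C.homologyπ j))) := by
    intro m
    induction m with
    | zero =>
      intro j hj p _
      have hZ : IsZero (C.cycles j) := (hbounded j hj).of_mono (C.iCycles j)
      have hK := hZ.of_mono (kernel.ι (C.homologyπ j))
      have e : C.X j ≅ kernel (C.homologyπ j) := (hbounded j hj).iso hK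
      exact (finite_iff ((F.leftDerived p).mapIso e)).1 (hterms j p)
    | succ m ih =>
      intro j hj p hp
      refine finite_right F (shortExact_cycles C j) p (hterms _ _) fun q hq => ?_
      exact finite_middle F (shortExact_boundaries C (j + 1)) q
        (ih (j + 1) (by omega) q (by omega)) (hhom (j + 1) (by omega) q (by omega))
  intro p hp
  -- `Z_0 = C_0`, so the sequence below is `0 → B_0 → C_0 → H_0 → 0`.
  refine finite_right F (shortExact_boundaries C 0) p ?_ fun q hq => hB n 0 (by omega) q (by omega)
  have : IsIso (C.iCycles 0) := C.isIso_iCycles 0 0 (by simp) (by simp)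
  exact (finite_iff ((F.leftDerived p).mapIso (asIso (C.iCycles 0)))).2 (hterms 0 p)
end

section
/- Let k be a field and let ⋯ → C(j+1) → C(j) → ⋯ → C(0) be an inverse sequence, indexed by the natural numbers, of chain complexes of k-vector spaces whose transition maps C(j+1) → C(j) are surjective in every degree. Fix p ≥ 1 and assume that the homology H_p(C(j)) is finite-dimensional over k for every j. Then the natural map H_{p−1}(lim_j C(j)) → lim_j H_{p−1}(C(j)) is an isomorphism, where the inverse limit of the complexes is taken degreewise. -/
/-!
The argument is the Mittag-Leffler principle, applied to sets of lifts rather than through `lim¹`.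

*Surjectivity.* A compatible family of classes `h_j ∈ H_q(C(j))` gives the inverse sequence of the
nonempty sets of cycles representing `h_j`. Its transition maps are surjective: two representatives
differ by a boundary, and a boundary lifts to a boundary because the transition maps of the
complexes are surjective. Hence there is a compatible family of representatives, i.e. a cycle of
`lim C`.

*Injectivity.* If a cycle `z` of `lim C` becomes a boundary in each `C(j)`, the sets
`S_j = {x ∈ C(j)_{q+1} | d x = z_j}` are nonempty. The images of `H_{q+1}(C(i)) → H_{q+1}(C(j))`
stabilise as `i` grows because `H_{q+1}(C(j))` is finite-dimensional. As boundaries lift, the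
images of `S_i` in `S_j` stabilise too (`exists_stable_primitives`), and the Mittag-Leffler
principle (`exists_compatible_of_mittagLeffler`) gives a compatible family `x_j ∈ S_j`, i.e. a
primitive of `z` in `lim C`.
-/

open CategoryTheory CategoryTheory.Limits Opposite

/-! ### The Mittag-Leffler principle for sets -/

/-- The Mittag-Leffler principle for subsets `S j` of the terms of an inverse sequence of sets:
if the `S j` are nonempty, stable under the transition maps, and the images of the `S i` in a given
`S j` stabilise, then some compatible family lies in all the `S j`. -/
lemma exists_compatible_of_mittagLeffler {X : ℕ → Type*} (f : ∀ i j, i ≤ j → X j → X i)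
    (f_id : ∀ i x, f i i le_rfl x = x)
    (f_comp : ∀ i j l (hij : i ≤ j) (hjl : j ≤ l) x,
      f i j hij (f j l hjl x) = f i l (hij.trans hjl) x)
    (S : ∀ j, Set (X j)) (hne : ∀ j, (S j).Nonempty)
    (hS : ∀ i j (hij : i ≤ j), ∀ x ∈ S j, f i j hij x ∈ S i)
    (hML : ∀ j, ∃ i, ∃ hji : j ≤ i, ∀ l (hil : i ≤ l), ∀ y ∈ S i,
      ∃ y' ∈ S l, f j l (hji.trans hil) y' = f j i hji y) :
    ∃ x : ∀ j, X j, (∀ j, x j ∈ S j) ∧ ∀ i j (hij : i ≤ j), f i j hij (x j) = x i := by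
  -- `E j` is the set of elements of `X j` that lift to every later `S l`.
  let E : ∀ j, Set (X j) := fun j => {x | ∀ l (h : j ≤ l), ∃ y ∈ S l, f j l h y = x}
  have key : ∀ j, ∃ i, ∃ hji : j ≤ i, ∀ y ∈ S i, f j i hji y ∈ E j := by
    intro j
    obtain ⟨i, hji, hi⟩ := hML j
    refine ⟨i, hji, fun y hy l hl => ?_⟩
    rcases le_total i l with h | h
    · exact hi l h y hy
    · exact ⟨f l i h y, hS _ _ _ _ hy, f_comp _ _ _ _ _ _⟩
  have h0 : (E 0).Nonempty := by
    obtain ⟨i, hi, h⟩ := key 0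
    obtain ⟨y, hy⟩ := hne i
    exact ⟨_, h y hy⟩
  have step : ∀ j (x : E j), ∃ y : E (j + 1), f j (j + 1) (Nat.le_succ j) y.1 = x.1 := by
    rintro j ⟨x, hx⟩
    obtain ⟨i, hi, h⟩ := key (j + 1)
    obtain ⟨y, hy, rfl⟩ := hx i ((Nat.le_succ j).trans hi)
    exact ⟨⟨_, h y hy⟩, f_comp _ _ _ _ _ _⟩
  choose g hg using step
  obtain ⟨x0, hx0⟩ := h0
  let x : ∀ j, E j := fun j => Nat.rec (motive := fun j => E j) ⟨x0, hx0⟩ g j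
  refine ⟨fun j => (x j).1, fun j => ?_, fun i j hij => ?_⟩
  · obtain ⟨y, hy, h⟩ := (x j).2 j le_rfl
    rw [f_id] at h
    change (x j).1 ∈ S j
    rwa [← h]
  · induction j, hij using Nat.le_induction with
    | base => exact f_id _ _
    | succ j hij ih =>
      rw [← f_comp i j (j + 1) hij (Nat.le_succ j), ← ih]
      exact congrArg _ (hg j (x j))

/-! ### Cycles and homology classes in terms of elements -/

section Elements

variable {k : Type} [Field k] (K : ChainComplex (ModuleCat.{0} k) ℕ)

lemma homologyπ_surjective (n : ℕ) : Function.Surjective (K.homologyπ n) :=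
  (ModuleCat.epi_iff_surjective _).1 inferInstance

lemma iCycles_injective (n : ℕ) : Function.Injective (K.iCycles n) :=
  (ModuleCat.mono_iff_injective _).1 inferInstance

lemma d_iCycles_apply (n m : ℕ) (z : K.cycles n) : K.d n m (K.iCycles n z) = 0 := by
  rw [← ConcreteCategory.comp_apply, K.iCycles_d]; rfl

lemma exists_cycle (n : ℕ) (x : K.X n) (hx : ∀ m, K.d n m x = 0) :
    ∃ z : K.cycles n, K.iCycles n z = x :=
  ⟨K.cyclesMk (x : (forget₂ (ModuleCat k) Ab).obj (K.X n)) _ rfl (hx _),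
    K.i_cyclesMk (x : (forget₂ (ModuleCat k) Ab).obj (K.X n)) _ rfl (hx _)⟩

lemma homologyπ_eq_zero_iff (n : ℕ) (z : K.cycles n) :
    K.homologyπ n z = 0 ↔ ∃ x : K.X (n + 1), K.d (n + 1) n x = K.iCycles n z := by
  have hprev : (ComplexShape.down ℕ).prev n = n + 1 := by simp
  have hex : (ShortComplex.mk _ _ (K.toCycles_comp_homologyπ (n + 1) n)).Exact :=
    ShortComplex.exact_of_g_is_cokernel _ (K.homologyIsCokernel (n + 1) n hprev)
  rw [ShortComplex.moduleCat_exact_iff] at hex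
  constructor
  · intro h
    obtain ⟨x, hx⟩ := hex z h
    refine ⟨x, ?_⟩
    rw [← K.toCycles_i (n + 1) n, ConcreteCategory.comp_apply]
    exact congrArg _ hx
  · rintro ⟨x, hx⟩
    rw [← K.toCycles_i (n + 1) n, ConcreteCategory.comp_apply] at hx
    rw [← iCycles_injective K n hx, ← ConcreteCategory.comp_apply,
      K.toCycles_comp_homologyπ]
    rfl

lemma homologyπ_eq_iff (n : ℕ) (z w : K.cycles n) :
    K.homologyπ n z = K.homologyπ n w ↔
      ∃ x : K.X (n + 1), K.d (n + 1) n x = K.iCycles n z - K.iCycles n w := by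
  rw [← sub_eq_zero, ← map_sub, homologyπ_eq_zero_iff, map_sub]

variable {K} {L : ChainComplex (ModuleCat.{0} k) ℕ} (φ : K ⟶ L)

lemma chainMap_d_apply (n m : ℕ) (x : K.X n) : φ.f m (K.d n m x) = L.d n m (φ.f n x) := by
  rw [← ConcreteCategory.comp_apply, ← φ.comm, ConcreteCategory.comp_apply]

lemma iCycles_cyclesMap_apply (n : ℕ) (z : K.cycles n) :
    L.iCycles n (HomologicalComplex.cyclesMap φ n z) = φ.f n (K.iCycles n z) := by
  rw [← ConcreteCategory.comp_apply, HomologicalComplex.cyclesMap_i, ConcreteCategory.comp_apply]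

lemma homologyMap_π_apply (n : ℕ) (z : K.cycles n) :
    HomologicalComplex.homologyMap φ n (K.homologyπ n z) =
      L.homologyπ n (HomologicalComplex.cyclesMap φ n z) := by
  rw [← ConcreteCategory.comp_apply, HomologicalComplex.homologyπ_naturality,
    ConcreteCategory.comp_apply]

end Elements

/-! ### Inverse sequences of complexes -/

section Tower

variable {k : Type} [Field k] (C : ℕᵒᵖ ⥤ ChainComplex (ModuleCat.{0} k) ℕ)

/-- The transition map `C(j) → C(i)` of the inverse sequence, for `i ≤ j`. -/
abbrev towerMap {i j : ℕ} (h : i ≤ j) : C.obj (op j) ⟶ C.obj (op i) := C.map (homOfLE h).op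

lemma towerMap_id (i : ℕ) : towerMap C (le_refl i) = 𝟙 _ := C.map_id _

lemma towerMap_comp {i j l : ℕ} (hij : i ≤ j) (hjl : j ≤ l) :
    towerMap C hjl ≫ towerMap C hij = towerMap C (hij.trans hjl) := (C.map_comp _ _).symm

lemma towerMap_id_apply (n i : ℕ) (x : (C.obj (op i)).X n) :
    (towerMap C (le_refl i)).f n x = x := by
  rw [towerMap_id]; rfl

lemma towerMap_comp_apply (n : ℕ) {i j l : ℕ} (hij : i ≤ j) (hjl : j ≤ l)
    (x : (C.obj (op l)).X n) :
    (towerMap C hij).f n ((towerMap C hjl).f n x) = (towerMap C (hij.trans hjl)).f n x := by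
  rw [← towerMap_comp C hij hjl]; rfl

lemma towerMap_surjective
    (hsurj : ∀ (j n : ℕ), Function.Surjective ((C.map (homOfLE (Nat.le_succ j)).op).f n))
    (n : ℕ) {i j : ℕ} (h : i ≤ j) : Function.Surjective ((towerMap C h).f n) := by
  induction j, h using Nat.le_induction with
  | base => exact fun x => ⟨x, towerMap_id_apply C n i x⟩
  | succ j hij ih =>
    intro x
    obtain ⟨y, rfl⟩ := ih x
    obtain ⟨w, rfl⟩ := hsurj j n y
    exact ⟨w, (towerMap_comp_apply C n hij (Nat.le_succ j) w).symm⟩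

lemma towerMap_limit_π_apply (n : ℕ) {i j : ℕ} (h : i ≤ j) (x : (limit C).X n) :
    (towerMap C h).f n ((limit.π C (op j)).f n x) = (limit.π C (op i)).f n x := by
  rw [← limit.w C (homOfLE h).op]; rfl

/-- Limits of complexes are computed degreewise, so compatible families of elements are
elements of the limit complex. -/
lemma exists_limit_element (n : ℕ) (x : ∀ j, (C.obj (op j)).X n)
    (hx : ∀ i j (hij : i ≤ j), (towerMap C hij).f n (x j) = x i) :
    ∃ ξ : (limit C).X n, ∀ j, (limit.π C (op j)).f n ξ = x j := by
  let G := HomologicalComplex.eval (ModuleCat.{0} k) (ComplexShape.down ℕ) n ⋙ forget _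
  have t := isLimitOfPreserves G (limit.isLimit C)
  let s : (C ⋙ G).sections := ⟨fun j => x j.unop, fun {a b} g => hx b.unop a.unop (leOfHom g.unop)⟩
  exact ⟨(Types.isLimitEquivSections t).symm s,
    fun j => Types.isLimitEquivSections_symm_apply t s (op j)⟩

lemma limit_element_ext (n : ℕ) (x y : (limit C).X n)
    (h : ∀ j, (limit.π C (op j)).f n x = (limit.π C (op j)).f n y) : x = y := by
  let G := HomologicalComplex.eval (ModuleCat.{0} k) (ComplexShape.down ℕ) n ⋙ forget _
  have t := isLimitOfPreserves G (limit.isLimit C)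
  apply (Types.isLimitEquivSections t).injective
  ext j
  exact h j.unop

/-- Stabilisation of the images of `H_n(C(i)) → H_n(C(j))`, from finite-dimensionality. -/
lemma exists_stable_homology (n j : ℕ) [FiniteDimensional k ((C.obj (op j)).homology n)] :
    ∃ i, ∃ hji : j ≤ i, ∀ l (hil : i ≤ l) (a : (C.obj (op i)).homology n),
      ∃ b : (C.obj (op l)).homology n,
        HomologicalComplex.homologyMap (towerMap C (hji.trans hil)) n b =
          HomologicalComplex.homologyMap (towerMap C hji) n a := by
  let R : ℕ →o (Submodule k ((C.obj (op j)).homology n))ᵒᵈ :=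
    { toFun := fun m => OrderDual.toDual (LinearMap.range
        (HomologicalComplex.homologyMap (towerMap C (Nat.le_add_right j m)) n).hom)
      monotone' := by
        intro a b hab
        change LinearMap.range _ ≤ LinearMap.range _
        rintro _ ⟨y, rfl⟩
        refine ⟨HomologicalComplex.homologyMap (towerMap C (Nat.add_le_add_left hab j)) n y, ?_⟩
        rw [← towerMap_comp C (Nat.le_add_right j a) (Nat.add_le_add_left hab j),
          HomologicalComplex.homologyMap_comp]
        rfl }
  obtain ⟨m, hm⟩ := IsArtinian.monotone_stabilizes R
  refine ⟨j + m, Nat.le_add_right j m, fun l hil a => ?_⟩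
  obtain ⟨m', rfl⟩ := Nat.exists_eq_add_of_le ((Nat.le_add_right j m).trans hil)
  have hRR : LinearMap.range _ = LinearMap.range _ := hm m' (by omega)
  have : HomologicalComplex.homologyMap (towerMap C (Nat.le_add_right j m)) n a ∈
      LinearMap.range
        (HomologicalComplex.homologyMap (towerMap C (Nat.le_add_right j m')) n).hom :=
    hRR ▸ ⟨a, rfl⟩
  exact this

/-- The images in `C(j)` of the sets of primitives of a compatible family `z` stabilise: those sets
are cosets of the cycles, whose images contain all boundaries of `C(j)` and stabilise modulo
boundaries. -/
lemma exists_stable_primitives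
    (hsurj : ∀ (j n : ℕ), Function.Surjective ((C.map (homOfLE (Nat.le_succ j)).op).f n))
    (q : ℕ) (z : ∀ j, (C.obj (op j)).X q)
    (hz : ∀ i j (hij : i ≤ j), (towerMap C hij).f q (z j) = z i)
    (hprim : ∀ j, ∃ x, (C.obj (op j)).d (q + 1) q x = z j)
    (j : ℕ) [FiniteDimensional k ((C.obj (op j)).homology (q + 1))] :
    ∃ i, ∃ hji : j ≤ i, ∀ l (hil : i ≤ l) (y : (C.obj (op i)).X (q + 1)),
      (C.obj (op i)).d (q + 1) q y = z i → ∃ y', (C.obj (op l)).d (q + 1) q y' = z l ∧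
        (towerMap C (hji.trans hil)).f (q + 1) y' = (towerMap C hji).f (q + 1) y := by
  obtain ⟨i, hji, hi⟩ := exists_stable_homology C (q + 1) j
  refine ⟨i, hji, fun l hil y hy => ?_⟩
  obtain ⟨w, hw⟩ := hprim l
  -- An arbitrary primitive `w` over `l` differs from `y` over `i` by a cycle `c`.
  obtain ⟨c, hc⟩ := exists_cycle (C.obj (op i)) (q + 1) ((towerMap C hil).f (q + 1) w - y) (by
    intro m
    by_cases hm : m = q
    · subst hm
      rw [map_sub, ← chainMap_d_apply, hw, hy, hz, sub_self]
    · rw [(C.obj (op i)).shape _ _ (by simp; omega)]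
      rfl)
  obtain ⟨b, hb⟩ := hi l hil ((C.obj (op i)).homologyπ (q + 1) c)
  obtain ⟨e, rfl⟩ := homologyπ_surjective _ _ b
  rw [homologyMap_π_apply, homologyMap_π_apply, homologyπ_eq_iff] at hb
  obtain ⟨u, hu⟩ := hb
  obtain ⟨v, rfl⟩ := towerMap_surjective C hsurj _ (hji.trans hil) u
  rw [iCycles_cyclesMap_apply, iCycles_cyclesMap_apply, hc, ← chainMap_d_apply, map_sub,
    towerMap_comp_apply] at hu
  refine ⟨w - (C.obj (op l)).iCycles _ e + (C.obj (op l)).d _ _ v, ?_, ?_⟩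
  · rw [map_add, map_sub, hw, d_iCycles_apply, ← ConcreteCategory.comp_apply,
      HomologicalComplex.d_comp_d]
    simp
  · rw [map_add, map_sub, hu]
    abel

/-- Injectivity: an element of `lim C` that is a boundary in every `C(j)` is a boundary. -/
lemma cycle_boundary_of_forall
    (hsurj : ∀ (j n : ℕ), Function.Surjective ((C.map (homOfLE (Nat.le_succ j)).op).f n))
    (q : ℕ) (hfin : ∀ j : ℕ, FiniteDimensional k ((C.obj (op j)).homology (q + 1)))
    (z : (limit C).X q)
    (hprim : ∀ j, ∃ x, (C.obj (op j)).d (q + 1) q x = (limit.π C (op j)).f q z) :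
    ∃ x, (limit C).d (q + 1) q x = z := by
  obtain ⟨x, hx, hcompat⟩ := exists_compatible_of_mittagLeffler
    (X := fun j => (C.obj (op j)).X (q + 1)) (fun i j h => (towerMap C h).f (q + 1))
    (towerMap_id_apply C (q + 1)) (fun i j l hij hjl x => towerMap_comp_apply C (q + 1) hij hjl x)
    (fun j => {x | (C.obj (op j)).d (q + 1) q x = (limit.π C (op j)).f q z}) hprim
    (fun i j hij x (hx : _ = _) => by
      change _ = _
      rw [← chainMap_d_apply, hx, towerMap_limit_π_apply])
    (fun j => by
      obtain ⟨i, hji, h⟩ := exists_stable_primitives C hsurj q _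
        (fun i j hij => towerMap_limit_π_apply C q hij z) hprim j
      exact ⟨i, hji, h⟩)
  obtain ⟨ξ, hξ⟩ := exists_limit_element C (q + 1) x hcompat
  refine ⟨ξ, limit_element_ext C q _ _ fun j => ?_⟩
  rw [chainMap_d_apply, hξ]
  exact hx j

/-- Surjectivity: a compatible family of homology classes comes from a cycle of `lim C`. -/
lemma exists_cycle_of_compatible_classes
    (hsurj : ∀ (j n : ℕ), Function.Surjective ((C.map (homOfLE (Nat.le_succ j)).op).f n))
    (q : ℕ) (h : ∀ j, (C.obj (op j)).homology q)
    (hh : ∀ i j (hij : i ≤ j), HomologicalComplex.homologyMap (towerMap C hij) q (h j) = h i) :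
    ∃ z : (limit C).cycles q, ∀ j,
      (C.obj (op j)).homologyπ q (HomologicalComplex.cyclesMap (limit.π C (op j)) q z) = h j := by
  obtain ⟨x, hx, hcompat⟩ := exists_compatible_of_mittagLeffler
    (X := fun j => (C.obj (op j)).X q) (fun i j h => (towerMap C h).f q)
    (towerMap_id_apply C q) (fun i j l hij hjl x => towerMap_comp_apply C q hij hjl x)
    (fun j => {x | ∃ z, (C.obj (op j)).iCycles q z = x ∧ (C.obj (op j)).homologyπ q z = h j})
    (fun j => by
      obtain ⟨z, hz⟩ := homologyπ_surjective _ _ (h j)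
      exact ⟨_, z, rfl, hz⟩)
    (by
      rintro i j hij _ ⟨z, rfl, hz⟩
      refine ⟨HomologicalComplex.cyclesMap (towerMap C hij) q z, iCycles_cyclesMap_apply _ _ _, ?_⟩
      rw [← homologyMap_π_apply, hz, hh])
    (by
      intro j
      -- All transition maps between the sets of representatives are surjective, so `i = j` works.
      refine ⟨j, le_rfl, ?_⟩
      rintro l hl _ ⟨z, rfl, hz⟩
      obtain ⟨w, hw⟩ := homologyπ_surjective _ _ (h l)
      have hzw := hz.trans (hh j l hl).symm
      rw [← hw, homologyMap_π_apply, homologyπ_eq_iff] at hzw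
      obtain ⟨u, hu⟩ := hzw
      obtain ⟨v, rfl⟩ := towerMap_surjective C hsurj _ hl u
      rw [iCycles_cyclesMap_apply, ← chainMap_d_apply] at hu
      refine ⟨_, ⟨w + (C.obj (op l)).toCycles (q + 1) q v, rfl, ?_⟩, ?_⟩
      · rw [map_add, hw, ← ConcreteCategory.comp_apply,
          HomologicalComplex.toCycles_comp_homologyπ]
        exact add_zero _
      · rw [map_add, ← ConcreteCategory.comp_apply _ _ v, HomologicalComplex.toCycles_i, map_add,
          hu, towerMap_id_apply]
        abel)
  obtain ⟨ξ, hξ⟩ := exists_limit_element C q x hcompat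
  obtain ⟨z, hz⟩ := exists_cycle (limit C) q ξ (by
    intro m
    apply limit_element_ext
    intro j
    obtain ⟨w, hw, -⟩ := hx j
    rw [chainMap_d_apply, hξ, ← hw, d_iCycles_apply, map_zero])
  refine ⟨z, fun j => ?_⟩
  obtain ⟨w, hw, hw'⟩ := hx j
  rw [← hw']
  congr 1
  apply iCycles_injective
  rw [iCycles_cyclesMap_apply, hz, hξ, hw]

end Tower

/-! ### The comparison map -/

/-- Let `⋯ → C(j+1) → C(j) → ⋯ → C(0)` be an inverse sequence of chain complexes of
`k`-vector spaces whose transition maps are surjective in every degree.  Fix `p ≥ 1`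
and assume that `H_p(C(j))` is finite-dimensional for every `j`.  Then the natural map
`H_{p-1}(lim_j C(j)) → lim_j H_{p-1}(C(j))` (induced by the projections from the
degreewise inverse limit) is an isomorphism. -/
theorem homology_limit_iso_of_surjective_of_finite
    {k : Type} [Field k]
    (C : ℕᵒᵖ ⥤ ChainComplex (ModuleCat k) ℕ)
    (hsurj : ∀ (j n : ℕ),
      Function.Surjective ((C.map (homOfLE (Nat.le_succ j)).op).f n))
    (p : ℕ) (hp : 1 ≤ p)
    (hfin : ∀ j : ℕ, FiniteDimensional k ((C.obj (op j)).homology p)) :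
    IsIso (limit.post C
      (HomologicalComplex.homologyFunctor (ModuleCat k) (ComplexShape.down ℕ) (p - 1))) := by
  obtain ⟨q, rfl⟩ := Nat.exists_eq_add_of_le' hp
  rw [Nat.add_sub_cancel]
  let H := HomologicalComplex.homologyFunctor (ModuleCat k) (ComplexShape.down ℕ) q
  have hpost : ∀ (j : ℕ) (a : (limit C).homology q),
      limit.π (C ⋙ H) (op j) (limit.post C H a) =
        HomologicalComplex.homologyMap (limit.π C (op j)) q a := fun j a =>
    congrArg (fun φ : H.obj (limit C) ⟶ H.obj (C.obj (op j)) => φ a) (limit.post_π C H (op j))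
  rw [ConcreteCategory.isIso_iff_bijective]
  constructor
  · rw [injective_iff_map_eq_zero]
    intro a ha
    obtain ⟨z, rfl⟩ := homologyπ_surjective (limit C) q a
    refine (homologyπ_eq_zero_iff (limit C) q z).2 ?_
    refine cycle_boundary_of_forall C hsurj q hfin _ fun j => ?_
    rw [← iCycles_cyclesMap_apply, ← homologyπ_eq_zero_iff, ← homologyMap_π_apply]
    exact (hpost j _).symm.trans ((congrArg (limit.π (C ⋙ H) (op j)) ha).trans (map_zero _))
  · intro b
    obtain ⟨z, hz⟩ := exists_cycle_of_compatible_classes C hsurj q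
      (fun j => limit.π (C ⋙ H) (op j) b)
      (fun i j hij => congrArg (fun φ : limit (C ⋙ H) ⟶ (C ⋙ H).obj (op i) => φ b)
        (limit.w (C ⋙ H) (homOfLE hij).op))
    refine ⟨(limit C).homologyπ q z, ?_⟩
    refine Concrete.limit_ext (C ⋙ H) _ _ fun j => ?_
    exact (hpost j.unop _).trans ((homologyMap_π_apply _ _ _).trans (hz j.unop))
end

section
/- (Borel's lemma for Schwartz functions.) Let n ≥ 1. For every family of real numbers (a_α) indexed by all multi-indices α ∈ ℕⁿ, there exists a Schwartz function φ ∈ 𝒮(ℝⁿ) such that ∂^α φ(0) = a_α for every multi-index α. Equivalently, the Taylor-series-at-the-origin map from 𝒮(ℝⁿ) to the ring of formal power series in n variables is surjective. -/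
/-!
Borel's construction: the function is the series of localized monomials
`f_α(x) = (a_α / α!) x^α χ(t_α x)`, where `χ` is a bump function equal to `1` near the origin and
`t_α ≥ 1`. Writing `f_α(x) = (a_α / α!) t_α^{-|α|} g_α(t_α x)` with `g_α(x) = x^α χ(x)`, the `k`-th
derivative of `f_α` is of size `t_α^{k - |α|}`, so for `t_α` large the derivatives of order `< |α|`
are bounded by a term of a fixed summable family (`exists_scale`, `exists_local_monomial`).

For each order `k`, this controls all but the finitely many terms with `|α| ≤ k`; hence the series
can be differentiated termwise to all orders. All terms are supported in one fixed ball, so the sum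
is smooth with compact support, thus Schwartz. Since `f_α` is the monomial `(a_α / α!) x^α` near
the origin, `∂^β f_α(0)` is `a_β` if `α = β` and `0` otherwise
(`multiPartialDeriv_monomial_zero`).
-/

/-- The partial derivative in the `i`-th coordinate direction of a function on `ℝⁿ`. -/
noncomputable def partialDeriv {n : ℕ} (i : Fin n) (f : (Fin n → ℝ) → ℝ) :
    (Fin n → ℝ) → ℝ :=
  fun x => fderiv ℝ f x (Pi.single i 1)

/-- The iterated partial derivative `∂^α` associated to a multi-index `α ∈ ℕⁿ`:
`∂^α = ∂₀^{α 0} ∘ ⋯ ∘ ∂_{n-1}^{α (n-1)}`. -/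
noncomputable def multiPartialDeriv {n : ℕ} (α : Fin n → ℕ)
    (f : (Fin n → ℝ) → ℝ) : (Fin n → ℝ) → ℝ :=
  (List.finRange n).foldr (fun i g => (partialDeriv i)^[α i] g) f

open scoped ContDiff

lemma partialDeriv_monomial {n : ℕ} (i : Fin n) (c : ℝ) (γ : Fin n → ℕ) :
    partialDeriv i (fun x => c * ∏ j, x j ^ γ j) =
      fun x => (c * γ i) * ∏ j, x j ^ (γ j - if j = i then 1 else 0) := by
  funext x
  have hu : ∀ j ∈ Finset.univ, HasFDerivAt (fun x : Fin n → ℝ => x j ^ γ j)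
      ((γ j * x j ^ (γ j - 1)) • (ContinuousLinearMap.proj j : (Fin n → ℝ) →L[ℝ] ℝ)) x := by
    intro j _
    simpa using (ContinuousLinearMap.proj (R := ℝ) (φ := fun _ : Fin n => ℝ) j).hasFDerivAt.pow
      (γ j) (x := x)
  have h := (HasFDerivAt.finsetProd hu).const_mul c
  unfold partialDeriv
  rw [h.fderiv]
  simp only [smul_apply, sum_apply,
    ContinuousLinearMap.proj_apply, smul_eq_mul]
  rw [Finset.sum_eq_single i]
  · rw [← Finset.mul_prod_erase Finset.univ (fun j => x j ^ (γ j - if j = i then 1 else 0))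
      (Finset.mem_univ i)]
    have : ∏ j ∈ Finset.univ.erase i, x j ^ (γ j - if j = i then 1 else 0) =
        ∏ j ∈ Finset.univ.erase i, x j ^ γ j := by
      refine Finset.prod_congr rfl fun j hj => ?_
      simp [Finset.ne_of_mem_erase hj]
    rw [this]
    simp
    ring
  · intro j _ hj
    simp [hj]
  · simp

lemma partialDeriv_iterate_monomial {n : ℕ} (i : Fin n) (m : ℕ) (c : ℝ) (γ : Fin n → ℕ) :
    (partialDeriv i)^[m] (fun x => c * ∏ j, x j ^ γ j) =
      fun x => (c * (γ i).descFactorial m) * ∏ j, x j ^ (γ j - if j = i then m else 0) := by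
  induction m with
  | zero => simp
  | succ m ih =>
    rw [Function.iterate_succ_apply', ih, partialDeriv_monomial]
    funext x
    congr 1
    · simp [Nat.descFactorial_succ]; ring
    · refine Finset.prod_congr rfl fun j _ => ?_
      congr 1
      by_cases h : j = i <;> simp [h]; omega

lemma foldr_partialDeriv_monomial {n : ℕ} (β γ : Fin n → ℕ) (c : ℝ) (l : List (Fin n))
    (hl : l.Nodup) :
    l.foldr (fun i g => (partialDeriv i)^[β i] g) (fun x => c * ∏ j, x j ^ γ j) =
      fun x => (c * (l.map fun i => ((γ i).descFactorial (β i) : ℝ)).prod) *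
        ∏ j, x j ^ (γ j - if j ∈ l then β j else 0) := by
  induction l with
  | nil => simp
  | cons i l ih =>
    rw [List.nodup_cons] at hl
    rw [List.foldr_cons, ih hl.2, partialDeriv_iterate_monomial]
    funext x
    congr 1
    · simp [hl.1]; ring
    · refine Finset.prod_congr rfl fun j _ => ?_
      congr 1
      by_cases h : j = i
      · subst h; simp [hl.1]
      · simp [h]

/-- The derivatives of a monomial at the origin: a factor `descFactorial` vanishes if some
`γ j < β j`, and a positive power of `0` remains if some `γ j > β j`. -/
lemma multiPartialDeriv_monomial_zero {n : ℕ} (β γ : Fin n → ℕ) (c : ℝ) :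
    multiPartialDeriv β (fun x => c * ∏ j, x j ^ γ j) 0 =
      if γ = β then c * ∏ j, ((β j).factorial : ℝ) else 0 := by
  unfold multiPartialDeriv
  rw [foldr_partialDeriv_monomial _ _ _ _ (List.nodup_finRange n)]
  have : ((List.finRange n).map fun i => ((γ i).descFactorial (β i) : ℝ)).prod =
      ∏ i, ((γ i).descFactorial (β i) : ℝ) := by
    rw [← List.ofFn_eq_map, List.prod_ofFn]
  simp only [this, List.mem_finRange, if_true, Pi.zero_apply, mul_assoc, ← Finset.prod_mul_distrib]
  split_ifs with h
  · subst h; simp [Nat.descFactorial_self]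
  · obtain ⟨j, hj⟩ := Function.ne_iff.1 h
    rw [Finset.prod_eq_zero (Finset.mem_univ j), mul_zero]
    rcases lt_or_gt_of_ne hj with h | h
    · simp [Nat.descFactorial_eq_zero_iff_lt.2 h]
    · rw [zero_pow (by omega), mul_zero]

/-- On smooth functions, `∂^β` is the evaluation of the iterated Fréchet derivative of a fixed order
at a fixed tuple of vectors (basis vectors, which need not be made explicit). -/
lemma multiPartialDeriv_eq_iteratedFDeriv {n : ℕ} (β : Fin n → ℕ) :
    ∃ (k : ℕ) (v : Fin k → Fin n → ℝ), ∀ f : (Fin n → ℝ) → ℝ, ContDiff ℝ ∞ f →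
      multiPartialDeriv β f = fun x => iteratedFDeriv ℝ k f x v := by
  unfold multiPartialDeriv
  induction List.finRange n with
  | nil => exact ⟨0, Fin.elim0, fun f _ => by simp⟩
  | cons i l ih =>
    simp only [List.foldr_cons]
    induction β i with
    | zero => simpa using ih
    | succ m ihm =>
      obtain ⟨k, v, h⟩ := ihm
      refine ⟨k + 1, Fin.cons (Pi.single i 1) v, fun f hf => ?_⟩
      rw [Function.iterate_succ_apply', h f hf]
      funext x
      have hd : DifferentiableAt ℝ (iteratedFDeriv ℝ k f) x :=
        (hf.differentiable_iteratedFDeriv (by exact_mod_cast ENat.natCast_lt_top k)) x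
      have := (hd.hasFDerivAt.continuousMultilinear_apply_const v).fderiv
      unfold partialDeriv
      rw [this, iteratedFDeriv_succ_apply_left]
      simp

lemma exists_bound_iteratedFDeriv {E : Type*} [NormedAddCommGroup E] [NormedSpace ℝ E]
    {g : E → ℝ} (hg : ContDiff ℝ ∞ g) (hc : HasCompactSupport g) (k : ℕ) :
    ∃ C, ∀ x, ‖iteratedFDeriv ℝ k g x‖ ≤ C :=
  (hg.continuous_iteratedFDeriv (mod_cast le_top)).bounded_above_of_compact_support
    (hc.iteratedFDeriv k)

/-- Rescaling makes all derivatives of order `< N` small: the `k`-th derivative of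
`x ↦ c t⁻ᴺ g (t x)` is of size `O(t ^ (k - N))` as `t → ∞`. -/
lemma exists_scale {E : Type*} [NormedAddCommGroup E] [NormedSpace ℝ E]
    {g : E → ℝ} (hg : ContDiff ℝ ∞ g) (hc : HasCompactSupport g) (c : ℝ) (N : ℕ) {ε : ℝ}
    (hε : 0 < ε) :
    ∃ t : ℝ, 1 ≤ t ∧ ∀ k < N, ∀ x,
      ‖iteratedFDeriv ℝ k (fun x => (c * (t ^ N)⁻¹) • g (t • x)) x‖ ≤ ε := by
  choose C hC using exists_bound_iteratedFDeriv hg hc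
  have hC0 : ∀ k, 0 ≤ C k := fun k => (norm_nonneg _).trans (hC k 0)
  set S := ∑ k ∈ Finset.range N, C k with hS
  have hS0 : 0 ≤ S := Finset.sum_nonneg fun k _ => hC0 k
  refine ⟨1 + |c| * S / ε, le_add_of_nonneg_right (by positivity), fun k hk x => ?_⟩
  set t := 1 + |c| * S / ε with ht
  have ht1 : 1 ≤ t := le_add_of_nonneg_right (by positivity)
  have ht0 : 0 < t := by linarith
  have hcomp : ContDiff ℝ ∞ fun x : E => g (t • x) := hg.comp (contDiff_const_smul t)
  have hkω : ((k : ℕ) : ℕ∞ω) ≤ ∞ := mod_cast le_top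
  rw [iteratedFDeriv_const_smul_apply' (hcomp.of_le hkω).contDiffAt]
  have h1 : ‖iteratedFDeriv ℝ k (fun x : E => g (t • x)) x‖ ≤ t ^ k * C k := by
    have := (t • ContinuousLinearMap.id ℝ E).iteratedFDeriv_comp_right hg x hkω
    have e : (fun x : E => g (t • x)) = g ∘ (t • ContinuousLinearMap.id ℝ E) := rfl
    rw [e, this]
    refine (ContinuousMultilinearMap.norm_compContinuousLinearMap_le _ _).trans ?_
    rw [Finset.prod_const, Finset.card_univ, Fintype.card_fin, mul_comm]
    have hn : ‖t • ContinuousLinearMap.id ℝ E‖ ≤ t := by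
      rw [norm_smul, Real.norm_of_nonneg ht0.le]
      exact mul_le_of_le_one_right ht0.le ContinuousLinearMap.norm_id_le
    gcongr
    exact hC k _
  have hCS : C k ≤ S :=
    Finset.single_le_sum (f := C) (fun i _ => hC0 i) (Finset.mem_range.2 hk)
  -- `k < N` leaves at least one factor `t⁻¹`
  have h2 : (t ^ N)⁻¹ * t ^ k ≤ t⁻¹ := by
    rw [inv_mul_le_iff₀ (by positivity), ← div_eq_mul_inv, le_div_iff₀ ht0, ← pow_succ]
    exact pow_le_pow_right₀ ht1 hk
  have h3 : |c| * S ≤ ε * t := by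
    rw [ht, mul_add, mul_div_cancel₀ _ hε.ne']; linarith
  calc ‖(c * (t ^ N)⁻¹) • iteratedFDeriv ℝ k (fun x : E => g (t • x)) x‖
      = |c| * (t ^ N)⁻¹ * ‖iteratedFDeriv ℝ k (fun x : E => g (t • x)) x‖ := by
        rw [norm_smul, norm_mul, Real.norm_eq_abs, Real.norm_of_nonneg (by positivity)]
    _ ≤ |c| * (t ^ N)⁻¹ * (t ^ k * C k) := by gcongr
    _ = ((t ^ N)⁻¹ * t ^ k) * (|c| * C k) := by ring
    _ ≤ t⁻¹ * (|c| * S) := by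
        have := hC0 k
        gcongr
    _ ≤ ε := by rw [inv_mul_le_iff₀ ht0, mul_comm t]; exact h3

/-- Localized monomials: `c x^α χ(t x)` with `χ` a bump function and `t ≥ 1` large. It agrees with
`c x^α` near the origin, and all its derivatives of order `< |α|` are uniformly small. -/
lemma exists_local_monomial {n : ℕ} (α : Fin n → ℕ) (c : ℝ) {ε : ℝ} (hε : 0 < ε) :
    ∃ f : (Fin n → ℝ) → ℝ, ContDiff ℝ ∞ f ∧ (∀ x, 2 < ‖x‖ → f x = 0) ∧
      f =ᶠ[nhds 0] (fun x => c * ∏ j, x j ^ α j) ∧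
      ∀ k < ∑ j, α j, ∀ x, ‖iteratedFDeriv ℝ k f x‖ ≤ ε := by
  let χ : ContDiffBump (0 : Fin n → ℝ) := ⟨1, 2, one_pos, one_lt_two⟩
  have hg : ContDiff ℝ ∞ fun x : Fin n → ℝ => (∏ j, x j ^ α j) * χ x := by
    refine ContDiff.mul ?_ χ.contDiff
    exact contDiff_prod fun j _ => (contDiff_apply ℝ ℝ j).pow _
  have hc : HasCompactSupport fun x : Fin n → ℝ => (∏ j, x j ^ α j) * χ x :=
    χ.hasCompactSupport.mul_left
  obtain ⟨t, ht1, ht⟩ := exists_scale hg hc c (∑ j, α j) hε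
  have ht0 : 0 < t := by linarith
  refine ⟨_, (hg.comp (contDiff_const_smul t)).const_smul _, fun x hx => ?_, ?_, ht⟩
  · have : χ (t • x) = 0 := by
      apply χ.zero_of_le_dist
      rw [dist_zero_right, norm_smul, Real.norm_of_nonneg ht0.le]
      change 2 ≤ t * ‖x‖
      nlinarith
    simp [this]
  · have h1 : ∀ᶠ x in nhds (0 : Fin n → ℝ), χ (t • x) = 1 := by
      have : Filter.Tendsto (fun x : Fin n → ℝ => t • x) (nhds 0) (nhds 0) := by
        simpa using (continuous_const_smul t).tendsto (0 : Fin n → ℝ)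
      exact this.eventually χ.eventuallyEq_one
    filter_upwards [h1] with x hx
    simp only [Function.comp, hx, Pi.smul_apply, smul_eq_mul, mul_pow, Finset.prod_mul_distrib,
      Finset.prod_pow_eq_pow_sum]
    field_simp

lemma Filter.EventuallyEq.multiPartialDeriv_eq {n : ℕ} {β : Fin n → ℕ}
    {f g : (Fin n → ℝ) → ℝ} (hf : ContDiff ℝ ∞ f) (hg : ContDiff ℝ ∞ g) {x : Fin n → ℝ}
    (h : f =ᶠ[nhds x] g) : multiPartialDeriv β f x = multiPartialDeriv β g x := by
  obtain ⟨k, v, hv⟩ := multiPartialDeriv_eq_iteratedFDeriv β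
  rw [hv f hf, hv g hg]
  simp only [(h.iteratedFDeriv ℝ k).eq_of_nhds]

/-- **Borel's lemma for Schwartz functions.**  For every family of real numbers
`(a_α)` indexed by multi-indices `α ∈ ℕⁿ` there exists a Schwartz function
`φ ∈ 𝒮(ℝⁿ)` with `∂^α φ (0) = a_α` for every `α`; i.e. the Taylor series map at
the origin from `𝒮(ℝⁿ)` to formal power series in `n` variables is surjective. -/
theorem borel_lemma_schwartz (n : ℕ) (hn : 1 ≤ n) (a : (Fin n → ℕ) → ℝ) :
    ∃ φ : SchwartzMap (Fin n → ℝ) ℝ,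
      ∀ α : Fin n → ℕ, multiPartialDeriv α (⇑φ) 0 = a α := by
  let c : (Fin n → ℕ) → ℝ := fun α => a α / ∏ j, ((α j).factorial : ℝ)
  have hε : ∀ α : Fin n → ℕ, (0 : ℝ) < (1 / 2) ^ Encodable.encode α := fun α => by positivity
  choose f hf hsupp hloc hsmall using fun α => exists_local_monomial α (c α) (hε α)
  have hcs : ∀ α, HasCompactSupport (f α) := fun α =>
    HasCompactSupport.intro (isCompact_closedBall 0 2) fun x hx => hsupp α x (by simpa using hx)
  choose C hC using fun α => exists_bound_iteratedFDeriv (hf α) (hcs α)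
  let v : ℕ → (Fin n → ℕ) → ℝ := fun k α =>
    if k < ∑ j, α j then (1 / 2) ^ Encodable.encode α else C α k
  -- Only finitely many `α` satisfy `|α| ≤ k`, so the large bounds `C α k` do not affect summability.
  have hv : ∀ k : ℕ, (k : ℕ∞) ≤ ⊤ → Summable (v k) := by
    intro k _
    refine summable_geometric_two_encode.congr_cofinite ?_
    have hfin : {α : Fin n → ℕ | ¬ k < ∑ j, α j}.Finite := by
      refine (Set.finite_Iic fun _ : Fin n => k).subset fun α hα j => ?_
      exact (Finset.single_le_sum (f := α) (fun _ _ => Nat.zero_le _) (Finset.mem_univ j)).trans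
        (not_lt.1 hα)
    filter_upwards [hfin.compl_mem_cofinite] with α hα
    simp only [Set.mem_compl_iff, Set.mem_ofPred_eq, not_not] at hα
    simp [v, hα]
  have hbound : ∀ (k : ℕ) (α : Fin n → ℕ) (x : Fin n → ℝ), (k : ℕ∞) ≤ ⊤ →
      ‖iteratedFDeriv ℝ k (f α) x‖ ≤ v k α := by
    intro k α x _
    simp only [v]
    split_ifs with h
    · exact hsmall α k h x
    · exact hC α k x
  have hφ : ContDiff ℝ ∞ fun x => ∑' α, f α x := contDiff_tsum hf hv hbound
  have hφc : HasCompactSupport fun x => ∑' α, f α x :=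
    HasCompactSupport.intro (isCompact_closedBall 0 2) fun x hx => by
      simp [hsupp _ x (by simpa using hx)]
  refine ⟨hφc.toSchwartzMap hφ, fun β => ?_⟩
  change multiPartialDeriv β (fun x => ∑' α, f α x) 0 = a β
  have hterm : ∀ α, multiPartialDeriv β (f α) 0 = if α = β then a β else 0 := by
    intro α
    have hm : ContDiff ℝ ∞ fun x : Fin n → ℝ => c α * ∏ j, x j ^ α j :=
      contDiff_const.mul (contDiff_prod fun j _ => (contDiff_apply ℝ ℝ j).pow _)
    rw [(hloc α).multiPartialDeriv_eq (hf α) hm, multiPartialDeriv_monomial_zero]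
    split_ifs with h
    · subst h
      exact div_mul_cancel₀ _ (Finset.prod_ne_zero_iff.2 fun j _ => by positivity)
    · rfl
  obtain ⟨k, w, hw⟩ := multiPartialDeriv_eq_iteratedFDeriv β
  have hsum : Summable fun α => iteratedFDeriv ℝ k (f α) 0 :=
    .of_norm_bounded (hv k le_top) fun α => hbound k α 0 le_top
  calc multiPartialDeriv β (fun x => ∑' α, f α x) 0
      = (∑' α, iteratedFDeriv ℝ k (f α) 0) w := by
        rw [hw _ hφ]
        beta_reduce
        rw [iteratedFDeriv_tsum_apply hf hv hbound le_top]
    _ = ∑' α, iteratedFDeriv ℝ k (f α) 0 w :=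
        (ContinuousMultilinearMap.apply ℝ (fun _ : Fin k => Fin n → ℝ) ℝ w).map_tsum hsum
    _ = ∑' α, if α = β then a β else 0 := by
        simp only [← hterm, hw _ (hf _)]
    _ = a β := tsum_ite_eq β _
end

section
/- Let n ≥ 1 and let f ∈ 𝒮(ℝⁿ) be a Schwartz function. Then ∫_{ℝⁿ} f(x) dx = 0 if and only if there exist Schwartz functions g₁, …, g_n ∈ 𝒮(ℝⁿ) such that f = ∂₁g₁ + ⋯ + ∂_n g_n. Consequently, the subspace {∂₁g₁ + ⋯ + ∂_n g_n : g₁,…,g_n ∈ 𝒮(ℝⁿ)} of 𝒮(ℝⁿ) is closed and of codimension one; i.e., the zeroth Lie algebra homology of 𝒮(ℝⁿ) under the translation action of ℝⁿ is separated and one-dimensional. -/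
/-!
Derivatives of Schwartz functions have integral zero by integration by parts against the
constant `1`. Conversely, suppose `∫ f = 0`. On the Fourier side this says that `F = 𝓕 f` vanishes
at the origin, and since `∂ᵢ` becomes multiplication by `2πi ξᵢ`, it suffices to write
`F = ∑ ξᵢ Gᵢ` with Schwartz `Gᵢ` (`exists_eq_sum_coord_smul`). Hadamard's formula
`F ξ = ∑ ξᵢ Hᵢ ξ`, `Hᵢ ξ = ∫₀¹ ∂ᵢF (t ξ) dt`, gives smooth `Hᵢ` without decay at infinity, while
`F = ∑ ξᵢ (ξᵢ F / |ξ|²)` is fine away from the origin. They are glued by a function `m` of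
temperate growth equal to `|ξ|⁻²` for `|ξ| ≥ 1` (`exists_temperate_inv_norm_sq`): as
`ρ = 1 - |ξ|² m` is smooth with compact support, `Gᵢ = ξᵢ m F + ρ Hᵢ` is Schwartz, and
`∑ ξᵢ Gᵢ = |ξ|² m F + ρ F = F`.

Hence the span of the derivatives is the kernel of the nonzero continuous functional `∫`, so it is
closed of codimension one.
-/

open MeasureTheory

/-- The subspace `{∂₁g₁ + ⋯ + ∂_n g_n : gᵢ ∈ 𝒮(ℝⁿ)}` of `𝒮(ℝⁿ)`, i.e. the span of
the images of the partial-derivative operators (the augmentation ideal of the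
translation action of the abelian Lie algebra `ℝⁿ`). -/
noncomputable def schwartzDerivSpan (n : ℕ) :
    Submodule ℝ (SchwartzMap (Fin n → ℝ) ℝ) :=
  Submodule.span ℝ {h : SchwartzMap (Fin n → ℝ) ℝ |
    ∃ (g : SchwartzMap (Fin n → ℝ) ℝ) (i : Fin n),
      ∀ x, h x = fderiv ℝ g x (Pi.single i 1)}

open scoped SchwartzMap ContDiff FourierTransform LineDeriv
open SchwartzMap

/-- The weight `t ^ k` makes the statement stable under differentiation: the derivative of the
average of `f` with weight `t ^ k` is the average of `fderiv f` with weight `t ^ (k + 1)`. -/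
theorem contDiff_radial_average {E : Type} [NormedAddCommGroup E] [NormedSpace ℝ E] (N : ℕ) :
    ∀ {F : Type} [NormedAddCommGroup F] [NormedSpace ℝ F] [CompleteSpace F]
      (k : ℕ) (f : 𝓢(E, F)),
      ContDiff ℝ N (fun x => ∫ t in (0 : ℝ)..1, t ^ k • f (t • x)) := by
  have hd : ∀ {F : Type} [NormedAddCommGroup F] [NormedSpace ℝ F] [CompleteSpace F]
      (k : ℕ) (f : 𝓢(E, F)) (x : E),
      HasFDerivAt (fun x => ∫ t in (0 : ℝ)..1, t ^ k • f (t • x))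
        (∫ t in (0 : ℝ)..1, t ^ (k + 1) • (fderivCLM ℝ E F f : 𝓢(E, E →L[ℝ] F)) (t • x)) x := by
    intro F _ _ _ k f x
    have hc : ∀ {F' : Type} [NormedAddCommGroup F'] [NormedSpace ℝ F'] (k : ℕ) (f : 𝓢(E, F'))
        (x : E), Continuous fun t : ℝ => t ^ k • f (t • x) := by
      intro F' _ _ k f x
      exact (continuous_id.pow k).smul (f.continuous.comp (continuous_id.smul continuous_const))
    refine intervalIntegral.hasFDerivAt_integral_of_dominated_of_fderiv_le (𝕜 := ℝ)
      (F := fun x t => t ^ k • f (t • x))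
      (F' := fun x t => t ^ (k + 1) • (fderivCLM ℝ E F f : 𝓢(E, E →L[ℝ] F)) (t • x))
      (bound := fun _ => SchwartzMap.seminorm ℝ 0 0 (fderivCLM ℝ E F f))
      (s := Set.univ) Filter.univ_mem ?_ ?_ ?_ ?_ ?_ ?_
    · exact Filter.Eventually.of_forall fun x => (hc k f x).aestronglyMeasurable
    · exact (hc k f x).intervalIntegrable 0 1
    · exact (hc (k + 1) (fderivCLM ℝ E F f) x).aestronglyMeasurable
    · refine Filter.Eventually.of_forall fun t ht x _ => ?_
      rw [Set.uIoc_of_le zero_le_one] at ht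
      rw [norm_smul, norm_pow, Real.norm_of_nonneg ht.1.le]
      calc _ ≤ 1 * ‖fderivCLM ℝ E F f (t • x)‖ := by
              gcongr
              exact pow_le_one₀ ht.1.le ht.2
        _ ≤ _ := by
              rw [one_mul]
              exact norm_le_seminorm ℝ _ _
    · exact intervalIntegrable_const
    · refine Filter.Eventually.of_forall fun t _ x _ => ?_
      have h1 : HasFDerivAt (fun x : E => t • x) (t • ContinuousLinearMap.id ℝ E) x :=
        (hasFDerivAt_id x).const_smul t
      have h2 := ((f.hasFDerivAt (t • x)).comp x h1).const_smul (t ^ k)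
      refine h2.congr_fderiv ?_
      ext v
      simp [pow_succ, mul_smul]
  induction N with
  | zero =>
    intro F _ _ _ k f
    exact contDiff_zero.2 (continuous_iff_continuousAt.2 fun x => (hd k f x).continuousAt)
  | succ N ih =>
    intro F _ _ _ k f
    push_cast
    rw [contDiff_succ_iff_hasFDerivAt]
    exact ⟨_, ih (k + 1) (fderivCLM ℝ E F f), hd k f⟩

/-- Hadamard's lemma: the fundamental theorem of calculus along the segment from `0` to `x`. -/
theorem eq_radial_average_fderiv {E F : Type} [NormedAddCommGroup E] [NormedSpace ℝ E]
    [NormedAddCommGroup F] [NormedSpace ℝ F] [CompleteSpace F] (f : 𝓢(E, F)) (h0 : f 0 = 0)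
    (x : E) : f x = (∫ t in (0 : ℝ)..1, fderivCLM ℝ E F f (t • x)) x := by
  have hc : Continuous fun t : ℝ => fderivCLM ℝ E F f (t • x) := by
    have := (fderivCLM ℝ E F f).continuous
    fun_prop
  rw [ContinuousLinearMap.intervalIntegral_apply (hc.intervalIntegrable 0 1)]
  have hder : ∀ t ∈ Set.uIcc (0 : ℝ) 1,
      HasDerivAt (fun t : ℝ => f (t • x)) (fderivCLM ℝ E F f (t • x) x) t := by
    intro t _
    have h1 : HasDerivAt (fun t : ℝ => t • x) x t := by
      simpa using (hasDerivAt_id t).smul_const x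
    exact (f.hasFDerivAt (t • x)).comp_hasDerivAt t h1
  rw [intervalIntegral.integral_eq_sub_of_hasDerivAt hder
    ((hc.clm_apply continuous_const).intervalIntegrable 0 1)]
  simp [h0]

theorem exists_temperate_inv_norm_sq (V : Type) [NormedAddCommGroup V] [InnerProductSpace ℝ V] :
    ∃ m : V → ℝ, m.HasTemperateGrowth ∧ ∀ x, 1 ≤ ‖x‖ → ‖x‖ ^ 2 * m x = 1 := by
  let b : ContDiffBump (0 : ℝ) := ⟨1 / 2, 3 / 4, by norm_num, by norm_num⟩
  -- With `u = (1 + ‖x‖²)⁻¹`, one has `‖x‖⁻² = u / (1 - u)`, and `‖x‖ ≥ 1` means `u ≤ 1/2`. Cutting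
  -- off near the pole `u = 1` gives a smooth compactly supported `θ`, and `m = θ ∘ u`.
  let θ : ℝ → ℝ := fun u => u / (1 - u) * b u
  have hθc : HasCompactSupport θ := b.hasCompactSupport.mul_left
  have hθ : ContDiff ℝ ∞ θ := by
    rw [contDiff_iff_contDiffAt]
    intro u
    rcases lt_or_ge u 1 with hu | hu
    · have hb : ContDiffAt ℝ ∞ b u := b.contDiff.contDiffAt
      exact (contDiffAt_id.div (contDiffAt_const.sub contDiffAt_id)
        (sub_pos.2 hu).ne').mul hb
    · have : θ =ᶠ[nhds u] fun _ => 0 := by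
        filter_upwards [lt_mem_nhds (show (3 / 4 : ℝ) < u by linarith)] with v hv
        have : b v = 0 := b.zero_of_le_dist (by
          rw [Real.dist_eq, sub_zero]; exact hv.le.trans (le_abs_self v))
        simp [θ, this]
      exact contDiffAt_const.congr_of_eventuallyEq this
  refine ⟨fun x => θ ((1 + ‖x‖ ^ 2) ^ (-1 : ℝ)),
    (hθc.hasTemperateGrowth hθ).comp (Function.hasTemperateGrowth_one_add_norm_sq_rpow V (-1)), ?_⟩
  intro x hx
  have hx2 : 1 ≤ ‖x‖ ^ 2 := one_le_pow₀ hx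
  beta_reduce
  rw [Real.rpow_neg_one]
  have hb : b (1 + ‖x‖ ^ 2)⁻¹ = 1 := by
    apply b.one_of_mem_closedBall
    rw [mem_closedBall_zero_iff, Real.norm_of_nonneg (by positivity)]
    exact (inv_anti₀ (by norm_num) (by linarith : (2 : ℝ) ≤ 1 + ‖x‖ ^ 2)).trans (by norm_num [b])
  have h1 : (1 : ℝ) + ‖x‖ ^ 2 ≠ 0 := by positivity
  have h2 : ‖x‖ ^ 2 ≠ 0 := by positivity
  have h3 : 1 - (1 + ‖x‖ ^ 2)⁻¹ = ‖x‖ ^ 2 / (1 + ‖x‖ ^ 2) := by field_simp; ring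
  simp only [θ, hb, h3]
  field_simp

/-- A Schwartz function vanishing at the origin lies in the ideal generated by the coordinates. -/
theorem exists_eq_sum_coord_smul {n : ℕ} (F : 𝓢(EuclideanSpace ℝ (Fin n), ℂ)) (h0 : F 0 = 0) :
    ∃ G : Fin n → 𝓢(EuclideanSpace ℝ (Fin n), ℂ), ∀ x, F x = ∑ i, x i • G i x := by
  obtain ⟨m, hm, hm1⟩ := exists_temperate_inv_norm_sq (EuclideanSpace ℝ (Fin n))
  let ρ : EuclideanSpace ℝ (Fin n) → ℝ := fun x => 1 - ‖x‖ ^ 2 * m x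
  have hρ : ContDiff ℝ ∞ ρ := contDiff_const.sub ((contDiff_norm_sq ℝ).mul hm.1)
  have hρc : HasCompactSupport ρ := by
    refine HasCompactSupport.of_support_subset_isCompact (isCompact_closedBall 0 1) fun x hx => ?_
    by_contra hx'
    rw [mem_closedBall_zero_iff, not_le] at hx'
    exact hx (by simp [ρ, hm1 x hx'.le])
  let A : EuclideanSpace ℝ (Fin n) → (EuclideanSpace ℝ (Fin n) →L[ℝ] ℂ) := fun x =>
    ∫ t in (0 : ℝ)..1, fderivCLM ℝ _ _ F (t • x)
  have hA : ContDiff ℝ ∞ A := by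
    rw [contDiff_infty]
    intro N
    simpa [A] using contDiff_radial_average N 0 (fderivCLM ℝ _ _ F)
  have hH : ∀ i : Fin n, ContDiff ℝ ∞ fun x => ρ x • A x (EuclideanSpace.single i 1) := fun i =>
    hρ.smul (hA.clm_apply contDiff_const)
  have hHc : ∀ i : Fin n, HasCompactSupport fun x => ρ x • A x (EuclideanSpace.single i 1) :=
    fun i => hρc.smul_right
  have hq : ∀ i : Fin n,
      (fun x : EuclideanSpace ℝ (Fin n) => x i * m x).HasTemperateGrowth := fun i =>
    (EuclideanSpace.proj (𝕜 := ℝ) i).hasTemperateGrowth.mul hm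
  refine ⟨fun i => smulLeftCLM ℂ (fun x => x i * m x) F + (hHc i).toSchwartzMap (hH i), fun x => ?_⟩
  have hx : A x x = ∑ i, x i • A x (EuclideanSpace.single i 1) := by
    conv_lhs => arg 2; rw [← (EuclideanSpace.basisFun (Fin n) ℝ).sum_repr x]
    simp [map_sum]
  have hn : ‖x‖ ^ 2 = ∑ i, x i ^ 2 := EuclideanSpace.real_norm_sq_eq x
  calc F x = (‖x‖ ^ 2 * m x) • F x + ρ x • A x x := by
        rw [← eq_radial_average_fderiv F h0 x, ← add_smul]; simp [ρ]
    _ = _ := by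
        rw [hx, hn, Finset.sum_mul, Finset.sum_smul, Finset.smul_sum, ← Finset.sum_add_distrib]
        refine Finset.sum_congr rfl fun i _ => ?_
        simp only [add_apply, smulLeftCLM_apply_apply (hq i),
          HasCompactSupport.toSchwartzMap_toFun, smul_add, smul_smul]
        congr 2 <;> ring

/-- Integration by parts against the constant function `1`. -/
theorem integral_fderiv_apply_eq_zero {n : ℕ} (g : 𝓢(Fin n → ℝ, ℝ)) (v : Fin n → ℝ) :
    ∫ x, fderiv ℝ g x v = 0 := by
  have h := integral_bilinear_hasLineDerivAt_right_eq_neg_left_of_integrable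
    (μ := (volume : Measure (Fin n → ℝ))) (f := fun _ => (1 : ℝ)) (f' := fun _ => 0) (g := g)
    (g' := fun x => fderiv ℝ g x v) (v := v) (B := ContinuousLinearMap.mul ℝ ℝ)
    (by simp) (by simpa using (∂_{v} g).integrable) (by simpa using g.integrable)
    (fun x _ => by simpa using (hasFDerivAt_const (1 : ℝ) x).hasLineDerivAt v)
    (fun x _ => (g.hasFDerivAt x).hasLineDerivAt v)
  simpa using h

/-- The complex-valued case on Euclidean space, where the Fourier transform is available. -/
theorem exists_eq_sum_deriv_complex {n : ℕ} (f : 𝓢(EuclideanSpace ℝ (Fin n), ℂ))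
    (hf : ∫ x, f x = 0) :
    ∃ g : Fin n → 𝓢(EuclideanSpace ℝ (Fin n), ℂ),
      f = ∑ i, ∂_{EuclideanSpace.single i (1 : ℝ)} (g i) := by
  obtain ⟨G, hG⟩ := exists_eq_sum_coord_smul (𝓕 f) (by
    rw [fourier_coe, Real.fourier_eq]; simpa using hf)
  have hF : 𝓕 f = ∑ i, smulLeftCLM ℂ (inner ℝ · (EuclideanSpace.single i (1 : ℝ))) (G i) := by
    ext x
    rw [hG x, sum_apply]
    refine Finset.sum_congr rfl fun i _ => ?_
    rw [smulLeftCLM_apply_apply (by fun_prop)]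
    simp [EuclideanSpace.inner_single_right]
  refine ⟨fun i => 𝓕⁻ ((2 * Real.pi * Complex.I)⁻¹ • G i), ?_⟩
  have h2 : (2 * Real.pi * Complex.I : ℂ) ≠ 0 := by simp [Real.pi_ne_zero]
  have : f = 𝓕⁻ (𝓕 f) := (FourierTransform.fourierInv_fourier_eq f).symm
  rw [this, hF]
  have hi : ∀ i, ∂_{EuclideanSpace.single i (1 : ℝ)} (𝓕⁻ ((2 * Real.pi * Complex.I)⁻¹ • G i)) =
      𝓕⁻ (smulLeftCLM ℂ (inner ℝ · (EuclideanSpace.single i (1 : ℝ))) (G i)) := by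
    intro i
    rw [lineDerivOp_fourierInv_eq]
    congr 1
    ext x
    simp only [smul_apply, smulLeftCLM_apply_apply
      (Function.hasTemperateGrowth_inner_left (EuclideanSpace.single i (1 : ℝ)))]
    rw [smul_comm _ (inner ℝ _ _), smul_smul, mul_inv_cancel₀ h2, one_smul]
  simp only [hi]
  exact map_sum (FourierTransform.fourierInvCLM ℂ 𝓢(EuclideanSpace ℝ (Fin n), ℂ)) _ _

/-- The real case follows by complexifying `f`, transporting it to Euclidean space, and taking the
real parts of the resulting functions. -/
theorem exists_eq_sum_deriv {n : ℕ} (f : 𝓢(Fin n → ℝ, ℝ)) (hf : ∫ x, f x = 0) :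
    ∃ g : Fin n → 𝓢(Fin n → ℝ, ℝ), ∀ x, f x = ∑ i, fderiv ℝ (g i) x (Pi.single i 1) := by
  let e := EuclideanSpace.equiv (Fin n) ℝ
  let f' : 𝓢(EuclideanSpace ℝ (Fin n), ℂ) :=
    postcompCLM Complex.ofRealCLM (compCLMOfContinuousLinearEquiv ℝ e f)
  have hf' : ∀ x, f' x = (f (e x) : ℂ) := fun x => rfl
  obtain ⟨g, hg⟩ := exists_eq_sum_deriv_complex f' (by
    simp only [hf']
    rw [integral_complex_ofReal]
    have := (PiLp.volume_preserving_ofLp (Fin n)).integral_comp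
      (MeasurableEquiv.toLp 2 (Fin n → ℝ)).symm.measurableEmbedding f
    rw [hf] at this
    exact_mod_cast this)
  refine ⟨fun i => compCLMOfContinuousLinearEquiv ℝ e.symm (postcompCLM Complex.reCLM (g i)),
    fun x => ?_⟩
  have hx := congrArg Complex.re (DFunLike.congr_fun hg (e.symm x))
  rw [hf', sum_apply, Complex.re_sum] at hx
  simp only [ContinuousLinearEquiv.apply_symm_apply, Complex.ofReal_re] at hx
  rw [hx]
  refine Finset.sum_congr rfl fun i _ => ?_
  have h1 : HasFDerivAt (fun y => (g i (e.symm y)).re)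
      (Complex.reCLM.comp ((fderiv ℝ (g i) (e.symm x)).comp (e.symm : _ →L[ℝ] _))) x :=
    Complex.reCLM.hasFDerivAt.comp x
      (((g i).hasFDerivAt (e.symm x)).comp x e.symm.hasFDerivAt)
  exact (DFunLike.congr_fun h1.fderiv (Pi.single i 1)).symm

/-- A Schwartz function `f ∈ 𝒮(ℝⁿ)` has `∫ f = 0` if and only if it is a sum of
partial derivatives `f = ∂₁g₁ + ⋯ + ∂_n g_n` of Schwartz functions.  Consequently
the subspace of such sums is closed and of codimension one in `𝒮(ℝⁿ)`: the zeroth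
Lie algebra homology of `𝒮(ℝⁿ)` under the translation action of `ℝⁿ` is separated
and one-dimensional. -/
theorem schwartz_integral_zero_iff_sum_of_derivatives (n : ℕ) (hn : 1 ≤ n) :
    (∀ f : SchwartzMap (Fin n → ℝ) ℝ,
      (∫ x, f x) = 0 ↔
        ∃ g : Fin n → SchwartzMap (Fin n → ℝ) ℝ,
          ∀ x, f x = ∑ i : Fin n, fderiv ℝ (g i) x (Pi.single i 1)) ∧
    IsClosed ((schwartzDerivSpan n : Submodule ℝ (SchwartzMap (Fin n → ℝ) ℝ)) :
      Set (SchwartzMap (Fin n → ℝ) ℝ)) ∧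
    Module.finrank ℝ (SchwartzMap (Fin n → ℝ) ℝ ⧸ schwartzDerivSpan n) = 1 := by
  have hspan : schwartzDerivSpan n =
      (integralCLM ℝ (volume : Measure (Fin n → ℝ)) : 𝓢(Fin n → ℝ, ℝ) →L[ℝ] ℝ).ker := by
    apply le_antisymm
    · refine Submodule.span_le.2 ?_
      rintro h ⟨g, i, hg⟩
      change integralCLM ℝ volume h = 0
      rw [integralCLM_apply, integral_congr_ae (Filter.Eventually.of_forall hg)]
      exact integral_fderiv_apply_eq_zero g _
    · intro f hf
      obtain ⟨g, hg⟩ := exists_eq_sum_deriv f hf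
      have : f = ∑ i, ∂_{(Pi.single i 1 : Fin n → ℝ)} (g i) := by
        ext x
        rw [hg x, sum_apply]
        rfl
      rw [this]
      exact Submodule.sum_mem _ fun i _ => Submodule.subset_span ⟨g i, i, fun x => rfl⟩
  refine ⟨fun f => ⟨exists_eq_sum_deriv f, ?_⟩, ?_, ?_⟩
  · rintro ⟨g, hg⟩
    rw [integral_congr_ae (Filter.Eventually.of_forall hg),
      integral_finsetSum _ fun i _ => (∂_{(Pi.single i 1 : Fin n → ℝ)} (g i)).integrable]
    exact Finset.sum_eq_zero fun i _ => integral_fderiv_apply_eq_zero (g i) _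
  · rw [hspan]
    exact ContinuousLinearMap.isClosed_ker _
  · let b : ContDiffBump (0 : Fin n → ℝ) := ⟨1, 2, one_pos, one_lt_two⟩
    let φ : 𝓢(Fin n → ℝ, ℝ) := b.hasCompactSupport.toSchwartzMap b.contDiff
    have hφ : integralCLM ℝ (volume : Measure (Fin n → ℝ)) φ ≠ 0 := b.integral_pos.ne'
    have hsurj : Function.Surjective
        ((integralCLM ℝ volume : 𝓢(Fin n → ℝ, ℝ) →L[ℝ] ℝ) : 𝓢(Fin n → ℝ, ℝ) →ₗ[ℝ] ℝ) :=
      LinearMap.surjective fun h => hφ (LinearMap.congr_fun h φ)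
    rw [hspan]
    exact (LinearMap.quotKerEquivOfSurjective _ hsurj).finrank_eq.trans (Module.finrank_self ℝ)
end

section
/- Let λ ∈ ℝ and let g : ℝ → ℂ be a Schwartz function. Then there exists a Schwartz function f : ℝ → ℂ with g(x) = f′(x) + iλ f(x) for all x ∈ ℝ if and only if ∫_ℝ g(x) e^{iλx} dx = 0. Consequently, {f′ + iλf : f ∈ 𝒮(ℝ,ℂ)} is a closed subspace of 𝒮(ℝ,ℂ) of codimension one. (This is the case of the main theorem where H = ℝ acts on X = ℝ by translations, twisted by the tempered unitary character x ↦ e^{iλx}.) -/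
/-!
Multiplication by the character `e_c x = exp (i c x)` is an automorphism of `𝒮(ℝ,ℂ)`, because all
derivatives of `e_c` are bounded. Since `(e_λ f)′ = e_λ (f′ + iλ f)`, it reduces everything to the
untwisted case: a Schwartz function `G` is the derivative of a Schwartz function if and only if
`∫ G = 0`.

Necessity is the fundamental theorem of calculus on `ℝ`. For sufficiency
(`exists_schwartz_primitive`) the primitive is `F x = ∫_{-∞}^x G`; the only point is its rapid decay
(`pow_mul_norm_integral_Iic_le`). When `x ≤ 0`, `|x|^k` is at most `|t|^k` on `(-∞, x]`, whence
`|x|^k |F x| ≤ ∫ |t|^k |G t| dt`. When `x ≥ 0`, the hypothesis gives `F x = -∫_x^∞ G` and the same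
estimate applies on `(x, ∞)`.

The range is therefore the kernel of the continuous functional `g ↦ ∫ e_λ g` (`twistedIntegral`),
which is nonzero, so it is closed of codimension one.
-/

open MeasureTheory Complex

/-- The subspace `{f′ + iλf : f ∈ 𝒮(ℝ,ℂ)}` of the complex Schwartz space `𝒮(ℝ,ℂ)`. -/
noncomputable def twistedDerivRange (lam : ℝ) : Submodule ℂ (SchwartzMap ℝ ℂ) :=
  Submodule.span ℂ {h : SchwartzMap ℝ ℂ |
    ∃ f : SchwartzMap ℝ ℂ, ∀ x : ℝ, h x = deriv f x + Complex.I * (lam : ℂ) * f x}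

open scoped ContDiff

/-- The character `x ↦ exp (i c x)` of `ℝ`. -/
noncomputable def twistChar (c : ℝ) (x : ℝ) : ℂ := exp (I * (c : ℂ) * (x : ℂ))

lemma twistChar_hasDerivAt (c x : ℝ) :
    HasDerivAt (twistChar c) (I * c * twistChar c x) x := by
  have h : HasDerivAt (fun y : ℝ => I * (c : ℂ) * (y : ℂ)) (I * c) x := by
    simpa using (Complex.ofRealCLM.hasDerivAt (x := x)).const_mul (I * (c : ℂ))
  have h2 := h.cexp
  rw [mul_comm (exp _)] at h2
  exact h2

lemma twistChar_neg_mul (c x : ℝ) : twistChar (-c) x * twistChar c x = 1 := by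
  simp [twistChar, ← Complex.exp_add]

lemma norm_twistChar (c x : ℝ) : ‖twistChar c x‖ = 1 := by
  have : I * (c : ℂ) * (x : ℂ) = ((c * x : ℝ) : ℂ) * I := by push_cast; ring
  rw [twistChar, this, Complex.norm_exp_ofReal_mul_I]

lemma iteratedDeriv_twistChar (c : ℝ) (n : ℕ) :
    iteratedDeriv n (twistChar c) = fun x => (I * c) ^ n * twistChar c x := by
  induction n with
  | zero => simp
  | succ n ih =>
    rw [iteratedDeriv_succ, ih]
    funext x
    rw [((twistChar_hasDerivAt c x).const_mul _).deriv]
    ring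

lemma twistChar_hasTemperateGrowth (c : ℝ) : (twistChar c).HasTemperateGrowth := by
  refine ⟨?_, fun n => ⟨0, |c| ^ n, fun x => ?_⟩⟩
  · have : ContDiff ℝ ∞ fun x : ℝ => exp (I * (c : ℂ) * (x : ℂ)) :=
      (contDiff_const.mul Complex.ofRealCLM.contDiff).cexp
    exact this
  · rw [norm_iteratedFDeriv_eq_norm_iteratedDeriv, iteratedDeriv_twistChar]
    simp [norm_twistChar]

/-- Multiplication by the character `twistChar c`, as an operator on the Schwartz space. -/
noncomputable def twistMul (c : ℝ) : SchwartzMap ℝ ℂ →L[ℂ] SchwartzMap ℝ ℂ :=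
  SchwartzMap.smulLeftCLM ℂ (twistChar c)

lemma twistMul_apply (c : ℝ) (f : SchwartzMap ℝ ℂ) (x : ℝ) :
    twistMul c f x = twistChar c x * f x := by
  rw [twistMul, SchwartzMap.smulLeftCLM_apply_apply (twistChar_hasTemperateGrowth c), smul_eq_mul]

lemma hasDerivAt_twistChar_mul (c x : ℝ) (f : SchwartzMap ℝ ℂ) :
    HasDerivAt (fun y => twistChar c y * f y)
      (twistChar c x * (deriv f x + I * c * f x)) x := by
  refine ((twistChar_hasDerivAt c x).mul (f.hasDerivAt x)).congr_deriv ?_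
  ring

/-- Rapid decay of the primitive `x ↦ ∫_{-∞}^x G` of a Schwartz function `G` of integral zero. -/
lemma pow_mul_norm_integral_Iic_le (G : SchwartzMap ℝ ℂ) (hG : ∫ x, G x = 0) (k : ℕ) (x : ℝ) :
    ‖x‖ ^ k * ‖∫ t in Set.Iic x, G t‖ ≤ ∫ t, ‖t‖ ^ k * ‖G t‖ := by
  have hint := G.integrable_pow_mul volume k
  -- The estimate on a half-line `s` on which `|x| ≤ |t|`.
  have key : ∀ s : Set ℝ, MeasurableSet s → (∀ t ∈ s, ‖x‖ ≤ ‖t‖) →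
      ‖x‖ ^ k * ‖∫ t in s, G t‖ ≤ ∫ t, ‖t‖ ^ k * ‖G t‖ := by
    intro s hs hxs
    calc ‖x‖ ^ k * ‖∫ t in s, G t‖
        ≤ ‖x‖ ^ k * ∫ t in s, ‖G t‖ := by
          gcongr
          exact norm_integral_le_integral_norm _
      _ = ∫ t in s, ‖x‖ ^ k * ‖G t‖ := (integral_const_mul _ _).symm
      _ ≤ ∫ t in s, ‖t‖ ^ k * ‖G t‖ := by
          refine setIntegral_mono_on (G.integrable.norm.const_mul _).integrableOn
            hint.integrableOn hs fun t ht => ?_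
          gcongr
          exact hxs t ht
      _ ≤ ∫ t, ‖t‖ ^ k * ‖G t‖ :=
          setIntegral_le_integral hint (Filter.Eventually.of_forall fun t => by positivity)
  rcases le_total x 0 with hx | hx
  · refine key _ measurableSet_Iic fun t ht => ?_
    have ht' : t ≤ x := ht
    rw [Real.norm_of_nonpos hx, Real.norm_of_nonpos (ht'.trans hx)]
    linarith
  · have h := intervalIntegral.integral_Iic_add_Ioi (b := x) (μ := volume)
      G.integrable.integrableOn G.integrable.integrableOn
    rw [hG] at h
    rw [eq_neg_of_add_eq_zero_left h, norm_neg]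
    refine key _ measurableSet_Ioi fun t ht => ?_
    have ht' : x < t := ht
    rw [Real.norm_of_nonneg hx, Real.norm_of_nonneg (hx.trans ht'.le)]
    exact ht'.le

lemma hasDerivAt_integral_Iic (G : SchwartzMap ℝ ℂ) (x : ℝ) :
    HasDerivAt (fun y => ∫ t in Set.Iic y, G t) (G x) x := by
  have h : (fun y => ∫ t in Set.Iic y, G t) =
      fun y => (∫ t in Set.Iic (0 : ℝ), G t) + ∫ t in (0 : ℝ)..y, G t := by
    funext y
    rw [← intervalIntegral.integral_Iic_sub_Iic G.integrable.integrableOn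
      G.integrable.integrableOn]
    ring
  rw [h]
  exact (intervalIntegral.integral_hasDerivAt_right
    (G.continuous.intervalIntegrable _ _)
    G.continuous.stronglyMeasurable.stronglyMeasurableAtFilter
    G.continuous.continuousAt).const_add _

/-- A Schwartz function of integral zero has a Schwartz primitive. -/
lemma exists_schwartz_primitive (G : SchwartzMap ℝ ℂ) (hG : ∫ x, G x = 0) :
    ∃ F : SchwartzMap ℝ ℂ, ∀ x, deriv F x = G x := by
  have hderiv : deriv (fun y => ∫ t in Set.Iic y, G t) = G :=
    funext fun x => (hasDerivAt_integral_Iic G x).deriv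
  refine ⟨⟨fun y => ∫ t in Set.Iic y, G t, ?_, fun k n => ?_⟩, fun x => congrFun hderiv x⟩
  · refine contDiff_infty_iff_deriv.2
      ⟨fun x => (hasDerivAt_integral_Iic G x).differentiableAt, ?_⟩
    rw [hderiv]
    exact G.smooth ⊤
  · cases n with
    | zero =>
      refine ⟨∫ t, ‖t‖ ^ k * ‖G t‖, fun x => ?_⟩
      rw [norm_iteratedFDeriv_zero]
      exact pow_mul_norm_integral_Iic_le G hG k x
    | succ n =>
      obtain ⟨C, hC⟩ := G.decay' k n
      refine ⟨C, fun x => ?_⟩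
      rw [norm_iteratedFDeriv_eq_norm_iteratedDeriv, iteratedDeriv_succ', hderiv,
        ← norm_iteratedFDeriv_eq_norm_iteratedDeriv]
      exact hC x

/-- The continuous functional `g ↦ ∫ g(x) e^{icx} dx` on the Schwartz space. -/
noncomputable def twistedIntegral (c : ℝ) : SchwartzMap ℝ ℂ →L[ℂ] ℂ :=
  (SchwartzMap.integralCLM ℂ volume).comp (twistMul c)

lemma twistedIntegral_apply (c : ℝ) (g : SchwartzMap ℝ ℂ) :
    twistedIntegral c g = ∫ x, twistMul c g x := rfl

lemma exists_twisted_primitive_iff (c : ℝ) (g : SchwartzMap ℝ ℂ) :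
    (∃ f : SchwartzMap ℝ ℂ, ∀ x : ℝ, g x = deriv f x + I * (c : ℂ) * f x) ↔
      twistedIntegral c g = 0 := by
  rw [twistedIntegral_apply]
  constructor
  · rintro ⟨f, hf⟩
    refine integral_eq_zero_of_hasDerivAt_of_integrable (f := fun x => twistMul c f x)
      (fun x => ?_) (twistMul c g).integrable (twistMul c f).integrable
    simp only [twistMul_apply, hf x]
    exact hasDerivAt_twistChar_mul c x f
  · intro h
    obtain ⟨F, hF⟩ := exists_schwartz_primitive _ h
    refine ⟨twistMul (-c) F, fun x => ?_⟩
    have h1 : deriv (twistMul (-c) F) x =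
        twistChar (-c) x * (deriv F x + I * ((-c : ℝ) : ℂ) * F x) := by
      rw [← (hasDerivAt_twistChar_mul (-c) x F).deriv]
      congr 1
      funext y
      exact twistMul_apply _ _ _
    rw [h1, hF, twistMul_apply, twistMul_apply]
    push_cast
    linear_combination -(g x) * twistChar_neg_mul c x

lemma twistedDerivRange_eq_ker (c : ℝ) :
    twistedDerivRange c = LinearMap.ker (twistedIntegral c : SchwartzMap ℝ ℂ →ₗ[ℂ] ℂ) := by
  have h : {h : SchwartzMap ℝ ℂ |
      ∃ f : SchwartzMap ℝ ℂ, ∀ x : ℝ, h x = deriv f x + Complex.I * (c : ℂ) * f x} =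
      (LinearMap.ker (twistedIntegral c : SchwartzMap ℝ ℂ →ₗ[ℂ] ℂ) : Set _) := by
    ext g
    exact exists_twisted_primitive_iff c g
  rw [twistedDerivRange, h, Submodule.span_eq]

lemma twistedIntegral_surjective (c : ℝ) : Function.Surjective (twistedIntegral c) := by
  let b : ContDiffBump (0 : ℝ) := default
  have hb : HasCompactSupport (fun x => (b x : ℂ)) :=
    b.hasCompactSupport.comp_left Complex.ofReal_zero
  let B : SchwartzMap ℝ ℂ := hb.toSchwartzMap (Complex.ofRealCLM.contDiff.comp b.contDiff)
  -- The witness is the bump function twisted by the opposite character.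
  have hB : twistedIntegral c (twistMul (-c) B) ≠ 0 := by
    have h : ∀ x, twistMul c (twistMul (-c) B) x = (b x : ℂ) := fun x => by
      rw [twistMul_apply, twistMul_apply]
      change _ * (_ * (b x : ℂ)) = _
      linear_combination (b x : ℂ) * twistChar_neg_mul c x
    rw [twistedIntegral_apply, integral_congr_ae (Filter.Eventually.of_forall h),
      integral_complex_ofReal]
    exact_mod_cast (b.integral_pos (μ := volume)).ne'
  intro z
  refine ⟨(z / twistedIntegral c (twistMul (-c) B)) • twistMul (-c) B, ?_⟩
  rw [map_smul, smul_eq_mul, div_mul_cancel₀ _ hB]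

/-- Let `λ ∈ ℝ` and `g ∈ 𝒮(ℝ,ℂ)`.  There exists a Schwartz function `f` with
`g = f′ + iλf` if and only if `∫ g(x) e^{iλx} dx = 0`.  Consequently
`{f′ + iλf : f ∈ 𝒮(ℝ,ℂ)}` is a closed subspace of `𝒮(ℝ,ℂ)` of codimension one.
(This is the case of the main theorem where `H = ℝ` acts on `X = ℝ` by translations,
twisted by the tempered unitary character `x ↦ e^{iλx}`.) -/
theorem schwartz_twisted_deriv_range (lam : ℝ) :
    (∀ g : SchwartzMap ℝ ℂ,
      (∃ f : SchwartzMap ℝ ℂ,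
          ∀ x : ℝ, g x = deriv f x + Complex.I * (lam : ℂ) * f x) ↔
        (∫ x : ℝ, g x * Complex.exp (Complex.I * (lam : ℂ) * (x : ℂ))) = 0) ∧
    IsClosed ((twistedDerivRange lam : Submodule ℂ (SchwartzMap ℝ ℂ)) :
      Set (SchwartzMap ℝ ℂ)) ∧
    Module.finrank ℂ (SchwartzMap ℝ ℂ ⧸ twistedDerivRange lam) = 1 := by
  refine ⟨fun g => ?_, ?_, ?_⟩
  · rw [exists_twisted_primitive_iff, twistedIntegral_apply]
    simp only [twistMul_apply, twistChar, mul_comm (g _)]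
  · rw [twistedDerivRange_eq_ker]
    exact (twistedIntegral lam).isClosed_ker
  · rw [twistedDerivRange_eq_ker,
      (LinearMap.quotKerEquivOfSurjective _ (twistedIntegral_surjective lam)).finrank_eq,
      Module.finrank_self]
end

section
/- Let g : ℝ → ℝ be a Schwartz function. Then there exists a Schwartz function f : ℝ → ℝ with g(x) = x · f′(x) for all x ∈ ℝ if and only if g(0) = 0 and ∫_ℝ g(x)/x dx = 0 (the integrand g(x)/x extends continuously across 0 since g(0) = 0, and is integrable). Consequently, {x ↦ x·f′(x) : f ∈ 𝒮(ℝ)} is a closed subspace of 𝒮(ℝ) of codimension two. (This is an instance of the main theorem for the action of the multiplicative group on ℝ by scaling, which has the three orbits {0}, ℝ₊, ℝ₋, the Lie algebra acting by the Euler operator x d/dx.) -/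
/-!
If `g = x f'` then `g(0) = 0` and `∫ g(x)/x dx = ∫ f' = 0`. Conversely, if `g(0) = 0` then
`g(x) = x h(x)` with `h(x) = ∫₀¹ g'(tx) dt` smooth (differentiate under the integral sign), and `h`
is Schwartz because the Leibniz rule `(xh)^(n+1) = x h^(n+1) + (n+1) h^(n)` bounds the derivatives
of `h` away from the origin by induction (`exists_eq_id_mul`). If moreover `∫ h = 0`, then the
primitive `f(x) = ∫_{-∞}^x h = -∫_x^∞ h` is Schwartz (`exists_primitive`), and `g = x f'`.

For closedness and codimension, fix a Schwartz function `φ` with `φ(0) = 1` and `∫ φ > 0`. The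
functionals `g ↦ g(0)` and `L g = ∫ (g(x) - g(0) φ(x))/x dx` are continuous on the Schwartz space,
because `|u(x)/x| (1 + x²) ≤ sup |u'| + sup |x u|` whenever `u(0) = 0`. Their common kernel is the
range of the Euler operator, and together they map onto `ℝ²`: `φ ↦ (1, 0)`, `x φ ↦ (0, ∫ φ)`.
-/

open MeasureTheory

/-- The subspace `{x ↦ x·f′(x) : f ∈ 𝒮(ℝ)}` of `𝒮(ℝ)`: the image of the Euler
operator `x d/dx`, arising from the scaling action of the multiplicative group on `ℝ`. -/
noncomputable def eulerOperatorRange : Submodule ℝ (SchwartzMap ℝ ℝ) :=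
  Submodule.span ℝ {h : SchwartzMap ℝ ℝ |
    ∃ f : SchwartzMap ℝ ℝ, ∀ x : ℝ, h x = x * deriv f x}

namespace EulerOperator
open Set Filter Topology
open scoped ContDiff

/-- The `n`-th derivative of `x ↦ ∫₀¹ g'(tx) dt`, obtained by differentiating under the integral sign.
For `n = 0` and `g(0) = 0` this is the smooth extension of `g(x)/x` across the origin. -/
noncomputable def quotientDeriv (g : SchwartzMap ℝ ℝ) (n : ℕ) (x : ℝ) : ℝ :=
  ∫ t in (0 : ℝ)..1, t ^ n * iteratedDeriv (n + 1) g (t * x)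

lemma continuous_iteratedDeriv (g : SchwartzMap ℝ ℝ) (n : ℕ) : Continuous (iteratedDeriv n g) :=
  (g.smooth ⊤).continuous_iteratedDeriv n (by exact_mod_cast le_top)

lemma hasDerivAt_iteratedDeriv {h : ℝ → ℝ} (hh : ContDiff ℝ ∞ h) (n : ℕ) (x : ℝ) :
    HasDerivAt (iteratedDeriv n h) (iteratedDeriv (n + 1) h x) x := by
  rw [iteratedDeriv_succ]
  exact (hh.differentiable_iteratedDeriv n (by exact_mod_cast WithTop.coe_lt_top n) x).hasDerivAt

lemma hasDerivAt_quotientDeriv (g : SchwartzMap ℝ ℝ) (n : ℕ) (x : ℝ) :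
    HasDerivAt (quotientDeriv g n) (quotientDeriv g (n + 1) x) x := by
  have hc := continuous_iteratedDeriv g
  refine (intervalIntegral.hasDerivAt_integral_of_dominated_loc_of_deriv_le
    (F := fun x t => t ^ n * iteratedDeriv (n + 1) g (t * x))
    (F' := fun x t => t ^ (n + 1) * iteratedDeriv (n + 1 + 1) g (t * x))
    (bound := fun _ => SchwartzMap.seminorm ℝ 0 (n + 1 + 1) g) (s := univ)
    univ_mem ?_ ?_ ?_ ?_ ?_ ?_).2
  · refine Eventually.of_forall fun y => Continuous.aestronglyMeasurable ?_
    have := hc (n + 1)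
    fun_prop
  · refine Continuous.intervalIntegrable ?_ _ _
    have := hc (n + 1)
    fun_prop
  · refine Continuous.aestronglyMeasurable ?_
    have := hc (n + 1 + 1)
    fun_prop
  · refine Eventually.of_forall fun t ht y _ => ?_
    rw [uIoc_of_le zero_le_one] at ht
    have h1 := SchwartzMap.le_seminorm' ℝ 0 (n + 1 + 1) g (t * y)
    rw [pow_zero, one_mul] at h1
    rw [norm_mul, Real.norm_of_nonneg (pow_nonneg ht.1.le _)]
    exact (mul_le_of_le_one_left (norm_nonneg _) (pow_le_one₀ ht.1.le ht.2)).trans h1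
  · simp
  · refine Eventually.of_forall fun t _ y _ => ?_
    have h2 : HasDerivAt (fun y : ℝ => t * y) t y := by
      simpa using (hasDerivAt_id y).const_mul t
    have h3 := ((hasDerivAt_iteratedDeriv (g.smooth ⊤) (n + 1) (t * y)).comp y h2).const_mul (t ^ n)
    refine h3.congr_deriv ?_
    ring

lemma iteratedDeriv_quotientDeriv (g : SchwartzMap ℝ ℝ) (n : ℕ) :
    iteratedDeriv n (quotientDeriv g 0) = quotientDeriv g n := by
  induction n with
  | zero => exact iteratedDeriv_zero
  | succ n ih =>
    rw [iteratedDeriv_succ, ih]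
    exact funext fun x => (hasDerivAt_quotientDeriv g n x).deriv

lemma contDiff_quotientDeriv (g : SchwartzMap ℝ ℝ) : ContDiff ℝ ∞ (quotientDeriv g 0) := by
  refine contDiff_of_differentiable_iteratedDeriv fun m _ => ?_
  rw [iteratedDeriv_quotientDeriv]
  exact fun x => (hasDerivAt_quotientDeriv g m x).differentiableAt

lemma mul_quotientDeriv (g : SchwartzMap ℝ ℝ) (hg : g 0 = 0) (x : ℝ) :
    x * quotientDeriv g 0 x = g x := by
  have h : ∀ t ∈ uIcc (0 : ℝ) 1,
      HasDerivAt (fun t : ℝ => g (t * x)) (x * iteratedDeriv 1 g (t * x)) t := by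
    intro t _
    have h2 : HasDerivAt (fun t : ℝ => t * x) x t := by
      simpa using (hasDerivAt_id t).mul_const x
    have h3 := (g.hasDerivAt (t * x)).comp t h2
    rw [iteratedDeriv_one, mul_comm x]
    exact h3
  have hc := continuous_iteratedDeriv g 1
  have := intervalIntegral.integral_eq_sub_of_hasDerivAt h
    (Continuous.intervalIntegrable (by fun_prop) _ _)
  rw [quotientDeriv, ← intervalIntegral.integral_const_mul]
  simpa [hg] using this

/-- Leibniz rule for `x ↦ x h(x)`. -/
lemma iteratedDeriv_succ_id_mul {h : ℝ → ℝ} (hh : ContDiff ℝ ∞ h) (n : ℕ) (x : ℝ) :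
    iteratedDeriv (n + 1) (fun y => y * h y) x =
      x * iteratedDeriv (n + 1) h x + (n + 1) * iteratedDeriv n h x := by
  induction n generalizing x with
  | zero =>
    have h1 := (hasDerivAt_id x).mul (hasDerivAt_iteratedDeriv hh 0 x)
    simp only [iteratedDeriv_zero] at h1
    rw [zero_add, iteratedDeriv_one, iteratedDeriv_zero]
    refine (HasDerivAt.deriv h1).trans ?_
    simp
    ring
  | succ n ih =>
    rw [iteratedDeriv_succ, funext ih]
    have h1 := ((hasDerivAt_id x).mul (hasDerivAt_iteratedDeriv hh (n + 1) x)).add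
      ((hasDerivAt_iteratedDeriv hh n x).const_mul ((n : ℝ) + 1))
    refine (HasDerivAt.deriv h1).trans ?_
    simp
    ring

/-- A smooth function `h` such that `x h(x)` is Schwartz is itself Schwartz: the Leibniz rule
bounds `h^(n+1)` outside `[-1, 1]` by `(xh)^(n+1)` and `h^(n)`. -/
lemma decay_of_id_mul (g : SchwartzMap ℝ ℝ) {h : ℝ → ℝ} (hh : ContDiff ℝ ∞ h)
    (hg : ∀ x, x * h x = g x) (k n : ℕ) :
    ∃ C : ℝ, ∀ x, ‖x‖ ^ k * ‖iteratedFDeriv ℝ n h x‖ ≤ C := by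
  simp only [norm_iteratedFDeriv_eq_norm_iteratedDeriv]
  have hfun : (fun y => y * h y) = g := funext hg
  -- it suffices to bound outside the compact interval `[-1, 1]`
  have key : ∀ n, (∃ C : ℝ, ∀ x, 1 < |x| → |x| ^ k * |iteratedDeriv n h x| ≤ C) →
      ∃ C : ℝ, ∀ x, ‖x‖ ^ k * ‖iteratedDeriv n h x‖ ≤ C := by
    rintro n ⟨C, hC⟩
    have hc : Continuous fun x => ‖x‖ ^ k * ‖iteratedDeriv n h x‖ := by
      have := hh.continuous_iteratedDeriv n (by exact_mod_cast le_top)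
      fun_prop
    obtain ⟨C', hC'⟩ := (isCompact_Icc (a := (-1 : ℝ)) (b := 1)).bddAbove_image hc.continuousOn
    refine ⟨max C C', fun x => ?_⟩
    rcases le_or_gt |x| 1 with hx | hx
    · exact (hC' ⟨x, abs_le.1 hx, rfl⟩).trans (le_max_right _ _)
    · exact (hC x hx).trans (le_max_left _ _)
  have abs_le_abs_id_mul : ∀ {x : ℝ} (y : ℝ), 1 < |x| → |y| ≤ |x * y| := fun y hx => by
    rw [abs_mul]
    exact le_mul_of_one_le_left (abs_nonneg _) hx.le
  induction n with
  | zero =>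
    refine key 0 ⟨SchwartzMap.seminorm ℝ k 0 g, fun x hx => ?_⟩
    refine le_trans ?_ (SchwartzMap.le_seminorm' ℝ k 0 g x)
    have := abs_le_abs_id_mul (h x) hx
    rw [hg] at this
    simp only [iteratedDeriv_zero, Real.norm_eq_abs]
    gcongr
  | succ n ih =>
    obtain ⟨C, hC⟩ := ih
    refine key (n + 1) ⟨SchwartzMap.seminorm ℝ k (n + 1) g + (n + 1) * C, fun x hx => ?_⟩
    have h1 := abs_le_abs_id_mul (iteratedDeriv (n + 1) h x) hx
    have h2 := iteratedDeriv_succ_id_mul hh n x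
    rw [hfun] at h2
    rw [show x * iteratedDeriv (n + 1) h x =
      iteratedDeriv (n + 1) g x - (n + 1) * iteratedDeriv n h x by rw [h2]; ring] at h1
    have h3 := h1.trans (abs_sub _ _)
    rw [abs_mul, abs_of_nonneg (by positivity : (0 : ℝ) ≤ n + 1)] at h3
    have h4 := SchwartzMap.le_seminorm' ℝ k (n + 1) g x
    have h5 := hC x
    simp only [Real.norm_eq_abs] at h4 h5
    calc |x| ^ k * |iteratedDeriv (n + 1) h x|
        ≤ |x| ^ k * (|iteratedDeriv (n + 1) g x| + (n + 1) * |iteratedDeriv n h x|) := by gcongr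
      _ = |x| ^ k * |iteratedDeriv (n + 1) g x| +
          (n + 1) * (|x| ^ k * |iteratedDeriv n h x|) := by ring
      _ ≤ _ := by gcongr

/-- Hadamard's lemma in the Schwartz space. -/
lemma exists_eq_id_mul (g : SchwartzMap ℝ ℝ) (hg : g 0 = 0) :
    ∃ h : SchwartzMap ℝ ℝ, ∀ x, g x = x * h x :=
  ⟨⟨quotientDeriv g 0, contDiff_quotientDeriv g,
    decay_of_id_mul g (contDiff_quotientDeriv g) (mul_quotientDeriv g hg)⟩,
    fun x => (mul_quotientDeriv g hg x).symm⟩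

/-- A Schwartz function of integral zero has a Schwartz primitive, namely `∫_{-∞}^x h`. -/
lemma exists_primitive (h : SchwartzMap ℝ ℝ) (hh : ∫ x, h x = 0) :
    ∃ f : SchwartzMap ℝ ℝ, ∀ x, deriv f x = h x := by
  set F : ℝ → ℝ := fun x => ∫ t in Iic x, h t with hF
  have hint : Integrable h := h.integrable
  have hder : ∀ x, HasDerivAt F (h x) x := by
    intro x
    have h1 : F = fun x => (∫ t in Iic (0 : ℝ), h t) + ∫ t in (0 : ℝ)..x, h t := by
      funext y
      rw [← intervalIntegral.integral_Iic_sub_Iic hint.integrableOn hint.integrableOn]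
      simp [hF]
    rw [h1]
    exact (h.continuous.integral_hasStrictDerivAt 0 x).hasDerivAt.const_add _
  have hderiv : deriv F = h := funext fun x => (hder x).deriv
  have hF' : ∀ x, F x = - ∫ t in Ioi x, h t := by
    intro x
    have := integral_add_compl (measurableSet_Iic (a := x)) hint
    rw [compl_Iic, hh] at this
    linarith
  -- both tails satisfy `|x|^k |∫ h| ≤ ∫ |t|^k |h|`, since `|x| ≤ |t|` on the tail
  have tail : ∀ (k : ℕ) (x : ℝ) (s : Set ℝ), MeasurableSet s → (∀ t ∈ s, |x| ≤ |t|) →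
      |x| ^ k * |∫ t in s, h t| ≤ ∫ t, ‖t‖ ^ k * ‖h t‖ := by
    intro k x s hs hxs
    have hk := h.integrable_pow_mul volume k
    calc |x| ^ k * |∫ t in s, h t| ≤ |x| ^ k * ∫ t in s, ‖h t‖ := by
          gcongr
          exact norm_integral_le_integral_norm (μ := volume.restrict s) (fun t => h t)
      _ = ∫ t in s, |x| ^ k * ‖h t‖ := (integral_const_mul _ _).symm
      _ ≤ ∫ t in s, ‖t‖ ^ k * ‖h t‖ := by
          refine setIntegral_mono_on (hint.norm.const_mul _).integrableOn hk.integrableOn hs ?_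
          intro t ht
          have := hxs t ht
          rw [Real.norm_eq_abs t]
          gcongr
      _ ≤ _ := setIntegral_le_integral hk (Eventually.of_forall fun t => by positivity)
  refine ⟨⟨F, ?_, ?_⟩, fun x => (hder x).deriv⟩
  · rw [contDiff_infty_iff_deriv, hderiv]
    exact ⟨fun x => (hder x).differentiableAt, h.smooth ⊤⟩
  · intro k n
    simp only [norm_iteratedFDeriv_eq_norm_iteratedDeriv]
    cases n with
    | zero =>
      refine ⟨∫ t, ‖t‖ ^ k * ‖h t‖, fun x => ?_⟩
      simp only [iteratedDeriv_zero]
      rcases le_total x 0 with hx | hx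
      · refine tail k x (Iic x) measurableSet_Iic fun t ht => ?_
        have ht : t ≤ x := ht
        rw [abs_of_nonpos hx, abs_of_nonpos (ht.trans hx)]
        linarith
      · rw [hF', norm_neg]
        refine tail k x (Ioi x) measurableSet_Ioi fun t ht => ?_
        have ht : x < t := ht
        rw [abs_of_nonneg hx, abs_of_nonneg (hx.trans ht.le)]
        exact ht.le
    | succ n =>
      refine ⟨SchwartzMap.seminorm ℝ k n h, fun x => ?_⟩
      rw [iteratedDeriv_succ', hderiv]
      exact SchwartzMap.le_seminorm' ℝ k n h x

lemma integral_div_id {g h : ℝ → ℝ} (hg : ∀ x, g x = x * h x) :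
    ∫ x, g x / x = ∫ x, h x := by
  refine integral_congr_ae ?_
  filter_upwards [compl_mem_ae_iff.2 (measure_singleton (0 : ℝ))] with x hx
  rw [hg, mul_div_cancel_left₀ _ hx]

theorem exists_iff (g : SchwartzMap ℝ ℝ) :
    (∃ f : SchwartzMap ℝ ℝ, ∀ x : ℝ, g x = x * deriv f x) ↔
      (g 0 = 0 ∧ (∫ x : ℝ, g x / x) = 0) := by
  constructor
  · rintro ⟨f, hf⟩
    refine ⟨by simpa using hf 0, ?_⟩
    rw [integral_div_id hf]
    exact integral_eq_zero_of_hasDerivAt_of_integrable f.hasDerivAt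
      (SchwartzMap.derivCLM ℝ ℝ f).integrable f.integrable
  · rintro ⟨h0, hi⟩
    obtain ⟨h, hh⟩ := exists_eq_id_mul g h0
    rw [integral_div_id hh] at hi
    obtain ⟨f, hf⟩ := exists_primitive h hi
    exact ⟨f, fun x => by rw [hf, hh]⟩

lemma exists_cutoff : ∃ φ : SchwartzMap ℝ ℝ, φ 0 = 1 ∧ 0 < ∫ x, φ x := by
  let b : ContDiffBump (0 : ℝ) := ⟨1, 2, one_pos, one_lt_two⟩
  refine ⟨b.hasCompactSupport.toSchwartzMap b.contDiff, ?_, ?_⟩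
  · exact b.one_of_mem_closedBall (by simp [b])
  · exact b.integral_pos

lemma abs_div_id_le (u : SchwartzMap ℝ ℝ) (hu : u 0 = 0) (x : ℝ) :
    ‖u x / x‖ ≤ (SchwartzMap.seminorm ℝ 0 1 u + SchwartzMap.seminorm ℝ 1 0 u) *
      (1 + x ^ 2)⁻¹ := by
  rcases eq_or_ne x 0 with rfl | hx
  · simp; positivity
  have h1 : |u x| ≤ SchwartzMap.seminorm ℝ 0 1 u * |x| := by
    have := Convex.norm_image_sub_le_of_norm_deriv_le (f := u) (s := univ) (x := 0) (y := x)
      (C := SchwartzMap.seminorm ℝ 0 1 u) (fun y _ => u.differentiableAt)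
      (fun y _ => by simpa using SchwartzMap.le_seminorm' ℝ 0 1 u y) convex_univ trivial trivial
    simpa [hu] using this
  have h2 : |x| * |u x| ≤ SchwartzMap.seminorm ℝ 1 0 u := by
    simpa using SchwartzMap.le_seminorm' ℝ 1 0 u x
  have hx' : 0 < |x| := abs_pos.2 hx
  rw [← div_eq_mul_inv, le_div_iff₀ (by positivity), norm_div, Real.norm_eq_abs, Real.norm_eq_abs,
    ← sq_abs, div_mul_eq_mul_div, div_le_iff₀ hx']
  nlinarith

lemma integrable_div_id (u : SchwartzMap ℝ ℝ) (hu : u 0 = 0) :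
    Integrable fun x => u x / x :=
  (integrable_inv_one_add_sq.const_mul _).mono'
    (u.continuous.measurable.div measurable_id).aestronglyMeasurable
    (Eventually.of_forall (abs_div_id_le u hu))

/-- Evaluation at the origin, as a continuous functional. -/
noncomputable def evalZero : SchwartzMap ℝ ℝ →L[ℝ] ℝ :=
  (BoundedContinuousFunction.evalCLM ℝ (0 : ℝ)).comp
    (SchwartzMap.toBoundedContinuousFunctionCLM ℝ ℝ ℝ)

lemma evalZero_apply (g : SchwartzMap ℝ ℝ) : evalZero g = g 0 := rfl

/-- Restricted to functions vanishing at `0`, the map `u ↦ ∫ u(x)/x dx` is continuous; composed with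
the projection `g ↦ g - g(0) φ` it extends to the whole Schwartz space. -/
lemma exists_integral_functional (φ : SchwartzMap ℝ ℝ) (hφ : φ 0 = 1) :
    ∃ L : SchwartzMap ℝ ℝ →L[ℝ] ℝ, ∀ g, L g = ∫ x, (g - g 0 • φ) x / x := by
  let P : SchwartzMap ℝ ℝ →L[ℝ] SchwartzMap ℝ ℝ :=
    ContinuousLinearMap.id ℝ _ - evalZero.smulRight φ
  have hP : ∀ g, P g = g - g 0 • φ := fun g => rfl
  have hP0 : ∀ g, P g 0 = 0 := fun g => by simp [hP, hφ]
  let A : SchwartzMap ℝ ℝ →ₗ[ℝ] ℝ :=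
    { toFun := fun g => ∫ x, P g x / x
      map_add' := fun f g => by
        rw [← integral_add (integrable_div_id _ (hP0 f)) (integrable_div_id _ (hP0 g))]
        simp [add_div]
      map_smul' := fun c g => by
        rw [RingHom.id_apply, ← integral_smul]
        simp [mul_div_assoc] }
  have hA : ∀ g, ‖A g‖ ≤
      Real.pi * (SchwartzMap.seminorm ℝ 0 1 (P g) + SchwartzMap.seminorm ℝ 1 0 (P g)) := by
    intro g
    refine (norm_integral_le_of_norm_le (integrable_inv_one_add_sq.const_mul _)
      (Eventually.of_forall (abs_div_id_le _ (hP0 g)))).trans_eq ?_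
    rw [integral_const_mul, integral_univ_inv_one_add_sq, mul_comm]
  have hcont : Continuous A := by
    refine continuous_of_continuousAt_zero A ?_
    have hs : ∀ k n, Continuous fun g => SchwartzMap.seminorm ℝ k n (P g) := fun k n =>
      ((schwartz_withSeminorms ℝ ℝ ℝ).continuous_seminorm (k, n)).comp P.continuous
    have hlim : Tendsto (fun g => Real.pi *
        (SchwartzMap.seminorm ℝ 0 1 (P g) + SchwartzMap.seminorm ℝ 1 0 (P g))) (𝓝 0) (𝓝 0) := by
      have := (((hs 0 1).add (hs 1 0)).const_mul Real.pi).tendsto 0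
      simpa using this
    rw [ContinuousAt, map_zero]
    exact squeeze_zero_norm hA hlim
  exact ⟨⟨A, hcont⟩, fun g => rfl⟩

/-- The range of the Euler operator is the kernel of a continuous surjection onto `ℝ × ℝ`. -/
lemma exists_surjective_ker_eq : ∃ T : SchwartzMap ℝ ℝ →L[ℝ] ℝ × ℝ,
    Function.Surjective T ∧ eulerOperatorRange = T.toLinearMap.ker := by
  obtain ⟨φ, hφ, hφi⟩ := exists_cutoff
  obtain ⟨L, hL⟩ := exists_integral_functional φ hφ
  have hL0 : ∀ g : SchwartzMap ℝ ℝ, g 0 = 0 → L g = ∫ x, g x / x := fun g hg => by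
    rw [hL, hg, zero_smul, sub_zero]
  refine ⟨evalZero.prod L, ?_, ?_⟩
  · let ψ : SchwartzMap ℝ ℝ := SchwartzMap.smulLeftCLM ℝ (fun x : ℝ => x) φ
    have hψ : ∀ x, ψ x = x * φ x := fun x =>
      SchwartzMap.smulLeftCLM_apply_apply (by fun_prop) φ x
    have hψ0 : ψ 0 = 0 := by simp [hψ]
    have hLψ : L ψ = ∫ x, φ x := by rw [hL0 ψ hψ0, integral_div_id hψ]
    have hLφ : L φ = 0 := by rw [hL, hφ, one_smul, sub_self]; simp
    rintro ⟨a, b⟩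
    refine ⟨a • φ + (b / ∫ x, φ x) • ψ, Prod.ext ?_ ?_⟩
    · change evalZero _ = a
      simp [evalZero_apply, hφ, hψ0]
    · change L _ = b
      rw [map_add, map_smul, map_smul, hLφ, hLψ, smul_zero, zero_add, smul_eq_mul,
        div_mul_cancel₀ _ hφi.ne']
  · have hker : ∀ g : SchwartzMap ℝ ℝ, g ∈ (evalZero.prod L).toLinearMap.ker ↔
        ∃ f : SchwartzMap ℝ ℝ, ∀ x : ℝ, g x = x * deriv f x := by
      intro g
      rw [exists_iff, LinearMap.mem_ker]
      change (g 0, L g) = (0, 0) ↔ _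
      rw [Prod.mk.injEq]
      exact and_congr_right fun h => by rw [hL0 g h]
    refine le_antisymm (Submodule.span_le.2 fun g hg => (hker g).2 hg) fun g hg => ?_
    exact Submodule.subset_span ((hker g).1 hg)

end EulerOperator

/-- Let `g ∈ 𝒮(ℝ)`.  There exists a Schwartz function `f` with `g(x) = x·f′(x)` if and
only if `g(0) = 0` and `∫ g(x)/x dx = 0`.  Consequently `{x ↦ x·f′(x) : f ∈ 𝒮(ℝ)}` is a
closed subspace of `𝒮(ℝ)` of codimension two.  (This is an instance of the main
theorem for the scaling action of the multiplicative group on `ℝ`, with orbits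
`{0}`, `ℝ₊`, `ℝ₋`, the Lie algebra acting by the Euler operator `x d/dx`.) -/
theorem schwartz_euler_operator_range :
    (∀ g : SchwartzMap ℝ ℝ,
      (∃ f : SchwartzMap ℝ ℝ, ∀ x : ℝ, g x = x * deriv f x) ↔
        (g 0 = 0 ∧ (∫ x : ℝ, g x / x) = 0)) ∧
    IsClosed ((eulerOperatorRange : Submodule ℝ (SchwartzMap ℝ ℝ)) :
      Set (SchwartzMap ℝ ℝ)) ∧
    Module.finrank ℝ (SchwartzMap ℝ ℝ ⧸ eulerOperatorRange) = 2 := by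
  obtain ⟨T, hT, hker⟩ := EulerOperator.exists_surjective_ker_eq
  refine ⟨EulerOperator.exists_iff, ?_, ?_⟩
  · rw [hker]
    exact T.isClosed_ker
  · rw [hker, (T.toLinearMap.quotKerEquivOfSurjective hT).finrank_eq]
    simp
end

section
/- Let n ≥ 2 and let g₁, …, g_n ∈ 𝒮(ℝⁿ) be Schwartz functions satisfying ∂_j g_i = ∂_i g_j for all 1 ≤ i, j ≤ n (i.e., the 1-form Σ g_i dx_i is closed). Then there exists a Schwartz function f ∈ 𝒮(ℝⁿ) with ∂_i f = g_i for all i. (This expresses the vanishing of the first de Rham cohomology with Schwartz coefficients of ℝⁿ for n ≥ 2, equivalently the vanishing of the Lie algebra homology H_{n−1} of the translation module 𝒮(ℝⁿ), as used in the computation of the homologies of 𝒮(H) for a Nash group H.) -/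
/-!
A closed 1-form `ω` on a normed space has a primitive `F` (the usual Poincaré lemma, available in
Mathlib), and every derivative of `F` of positive order is a derivative of `ω`, hence decays
rapidly. It remains to make `F` itself decay after subtracting a constant.

If `ω` decays rapidly, the mean value inequality on the segment from `2 ^ m • x` to
`2 ^ (m + 1) • x` shows that `F (2 ^ m • x)` converges geometrically to a limit `L x`, with
`F x - L x` rapidly decreasing in `x` (`exists_dyadic_limit`). The mean value inequality on the
segment from `2 ^ m • x` to `2 ^ m • y`, for `y` close to `x ≠ 0`, shows that `L` is locally constant
on the complement of the origin. That complement is connected in dimension at least two, so `L` is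
a constant `c` there (`exists_const_decay`), and `F - c` is a Schwartz primitive.
-/

open Filter Topology SchwartzMap

section Primitive

variable {E : Type*} [NormedAddCommGroup E] [NormedSpace ℝ E]
  {ω : 𝓢(E, E →L[ℝ] ℝ)} {F : E → ℝ}

/-- Mean value inequality for a primitive of `ω` on a segment staying at distance at least `r` from
the origin. -/
lemma norm_sub_le_of_segment (hF : ∀ x, HasFDerivAt F (ω x) x) {k : ℕ} {C : ℝ}
    (hC : ∀ x, ‖x‖ ^ k * ‖ω x‖ ≤ C) {r : ℝ} (hr : 0 < r) {x y : E}
    (h : ∀ z ∈ segment ℝ x y, r ≤ ‖z‖) : ‖F y - F x‖ ≤ C / r ^ k * ‖y - x‖ := by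
  refine (convex_segment x y).norm_image_sub_le_of_norm_hasFDerivWithin_le
    (fun z _ => (hF z).hasFDerivWithinAt) (fun z hz => ?_)
    (left_mem_segment ℝ x y) (right_mem_segment ℝ x y)
  rw [le_div_iff₀ (by positivity), mul_comm]
  refine le_trans ?_ (hC z)
  have := h z hz
  gcongr

lemma exists_pow_decay (ω : 𝓢(E, E →L[ℝ] ℝ)) (k : ℕ) :
    ∃ C, 0 ≤ C ∧ ∀ x, ‖x‖ ^ k * ‖ω x‖ ≤ C := by
  obtain ⟨C, hC0, hC⟩ := ω.decay k 0
  exact ⟨C, hC0.le, fun x => by simpa using hC x⟩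

lemma norm_dyadic_step_le (hF : ∀ x, HasFDerivAt F (ω x) x) {j : ℕ} {C : ℝ} (hC0 : 0 ≤ C)
    (hC : ∀ x, ‖x‖ ^ (j + 2) * ‖ω x‖ ≤ C) {x : E} (hx : x ≠ 0) (m : ℕ) :
    dist (F ((2 : ℝ) ^ m • x)) (F ((2 : ℝ) ^ (m + 1) • x)) ≤
      C / ‖x‖ ^ (j + 1) * (1 / 2) ^ m := by
  have hx' : 0 < ‖x‖ := norm_pos_iff.2 hx
  have hn : ‖(2 : ℝ) ^ m • x‖ = 2 ^ m * ‖x‖ := by simp [norm_smul]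
  have key := norm_sub_le_of_segment hF hC (r := 2 ^ m * ‖x‖) (by positivity)
    (x := (2 : ℝ) ^ m • x) (y := (2 : ℝ) ^ (m + 1) • x) (by
      rintro z ⟨a, b, ha, hb, hab, rfl⟩
      rw [smul_smul, smul_smul, ← add_smul, norm_smul, Real.norm_of_nonneg (by positivity)]
      gcongr
      rw [pow_succ]
      have : (0 : ℝ) ≤ 2 ^ m := by positivity
      obtain rfl : a = 1 - b := by linarith
      nlinarith [mul_nonneg hb this])
  have hd : (2 : ℝ) ^ (m + 1) • x - (2 : ℝ) ^ m • x = (2 : ℝ) ^ m • x := by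
    rw [← sub_smul]; congr 1; ring
  rw [hd, hn] at key
  rw [dist_comm, dist_eq_norm]
  refine key.trans ?_
  have h1 : C / (2 ^ m * ‖x‖) ^ (j + 2) * (2 ^ m * ‖x‖)
      = C / ‖x‖ ^ (j + 1) * (1 / (2 ^ m) ^ (j + 1)) := by
    field_simp
    ring
  rw [h1, one_div_pow]
  have h2 : (1 : ℝ) ≤ 2 ^ m := one_le_pow₀ (by norm_num)
  have h3 : (2 : ℝ) ^ m ≤ (2 ^ m) ^ (j + 1) := le_self_pow₀ h2 (by omega)
  gcongr

/-- A primitive of a rapidly decreasing form converges along dyadic dilations, at a rapid rate. -/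
lemma exists_dyadic_limit (hF : ∀ x, HasFDerivAt F (ω x) x) :
    ∃ L : E → ℝ, (∀ x, x ≠ 0 → Tendsto (fun m : ℕ => F ((2 : ℝ) ^ m • x)) atTop (𝓝 (L x))) ∧
      ∀ j : ℕ, ∃ C, ∀ x, x ≠ 0 → ‖x‖ ^ (j + 1) * ‖F x - L x‖ ≤ C := by
  have hlim : ∀ x, ∃ l, x ≠ 0 → Tendsto (fun m : ℕ => F ((2 : ℝ) ^ m • x)) atTop (𝓝 l) := by
    intro x
    by_cases hx : x = 0
    · exact ⟨0, fun h => absurd hx h⟩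
    obtain ⟨C, hC0, hC⟩ := exists_pow_decay ω (0 + 2)
    obtain ⟨l, hl⟩ := cauchySeq_tendsto_of_complete
      (cauchySeq_of_le_geometric _ _ (by norm_num) (norm_dyadic_step_le hF hC0 hC hx))
    exact ⟨l, fun _ => hl⟩
  choose L hL using hlim
  refine ⟨L, hL, fun j => ?_⟩
  obtain ⟨C, hC0, hC⟩ := exists_pow_decay ω (j + 2)
  refine ⟨2 * C, fun x hx => ?_⟩
  have hx' : 0 < ‖x‖ := norm_pos_iff.2 hx
  have := dist_le_of_le_geometric_of_tendsto₀ _ _ (by norm_num)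
    (norm_dyadic_step_le hF hC0 hC hx) (hL x hx)
  rw [pow_zero, one_smul, dist_eq_norm] at this
  calc ‖x‖ ^ (j + 1) * ‖F x - L x‖ ≤ ‖x‖ ^ (j + 1) * (C / ‖x‖ ^ (j + 1) / (1 - 1 / 2)) := by gcongr
    _ = 2 * C := by field_simp; ring

/-- Limits along nearby rays agree. -/
lemma dyadic_limit_eq_of_near (hF : ∀ x, HasFDerivAt F (ω x) x) {x y : E} (hx : x ≠ 0)
    (hxy : ‖y - x‖ ≤ ‖x‖ / 2) {a b : ℝ}
    (ha : Tendsto (fun m : ℕ => F ((2 : ℝ) ^ m • x)) atTop (𝓝 a))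
    (hb : Tendsto (fun m : ℕ => F ((2 : ℝ) ^ m • y)) atTop (𝓝 b)) : b = a := by
  have hx' : 0 < ‖x‖ := norm_pos_iff.2 hx
  obtain ⟨C, hC0, hC⟩ := exists_pow_decay ω 2
  refine sub_eq_zero.1 (tendsto_nhds_unique (hb.sub ha) ?_)
  have hz : Tendsto (fun m : ℕ => C / (‖x‖ / 2) ^ 2 * ‖y - x‖ * (1 / 2 : ℝ) ^ m) atTop (𝓝 0) := by
    simpa using (tendsto_pow_atTop_nhds_zero_of_lt_one (r := (1 / 2 : ℝ)) (by norm_num)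
      (by norm_num)).const_mul (C / (‖x‖ / 2) ^ 2 * ‖y - x‖)
  refine squeeze_zero_norm (fun m => ?_) hz
  have key := norm_sub_le_of_segment hF hC (r := 2 ^ m * (‖x‖ / 2)) (by positivity)
    (x := (2 : ℝ) ^ m • x) (y := (2 : ℝ) ^ m • y) (by
      rintro z ⟨s, t, hs, ht, hst, rfl⟩
      have he : s • (2 : ℝ) ^ m • x + t • (2 : ℝ) ^ m • y = (2 : ℝ) ^ m • (x + t • (y - x)) := by
        obtain rfl : s = 1 - t := by linarith
        module
      rw [he, norm_smul, Real.norm_of_nonneg (by positivity)]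
      gcongr
      have h1 : ‖t • (y - x)‖ ≤ ‖x‖ / 2 := by
        rw [norm_smul, Real.norm_of_nonneg ht]
        nlinarith [norm_nonneg (y - x)]
      have h2 := norm_sub_le (x + t • (y - x)) (t • (y - x))
      rw [add_sub_cancel_right] at h2
      linarith)
  refine key.trans (le_of_eq ?_)
  rw [← smul_sub, norm_smul, Real.norm_of_nonneg (by positivity), one_div_pow]
  field_simp

/-- In dimension at least two, a primitive of a rapidly decreasing form differs from a rapidly
decreasing function by a constant. -/
lemma exists_const_decay (hE : 1 < Module.rank ℝ E) (hF : ∀ x, HasFDerivAt F (ω x) x) :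
    ∃ c, ∀ k : ℕ, ∃ C, ∀ x, ‖x‖ ^ k * ‖F x - c‖ ≤ C := by
  obtain ⟨L, hL, hdecay⟩ := exists_dyadic_limit hF
  obtain ⟨c, hc⟩ : ∃ c, ∀ x, x ≠ 0 → L x = c := by
    have hconn : IsPreconnected ({0}ᶜ : Set E) :=
      (isConnected_compl_singleton_of_one_lt_rank hE 0).isPreconnected
    have : PreconnectedSpace ({0}ᶜ : Set E) := Subtype.preconnectedSpace hconn
    have hloc : IsLocallyConstant (fun x : ({0}ᶜ : Set E) => L x) := by
      refine (IsLocallyConstant.iff_eventually_eq _).2 fun x => ?_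
      have hx : (x : E) ≠ 0 := x.2
      have hx' : 0 < ‖(x : E)‖ / 2 := half_pos (norm_pos_iff.2 hx)
      filter_upwards [Metric.ball_mem_nhds x hx'] with y hy
      refine dyadic_limit_eq_of_near hF hx ?_ (hL x hx) (hL y y.2)
      rw [← dist_eq_norm]
      exact (Metric.mem_ball.1 hy).le
    obtain ⟨c, hc⟩ := hloc.exists_eq_const
    exact ⟨c, fun x hx => congrFun hc ⟨x, hx⟩⟩
  refine ⟨c, fun k => ?_⟩
  obtain ⟨C, hC⟩ := hdecay k
  obtain ⟨D, hD0, hD⟩ := exists_pow_decay ω 0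
  refine ⟨max C (D + ‖F 0 - c‖), fun x => ?_⟩
  rcases le_total ‖x‖ 1 with hx | hx
  · refine le_max_of_le_right ?_
    have h1 : ‖F x - F 0‖ ≤ D * ‖x - 0‖ :=
      convex_univ.norm_image_sub_le_of_norm_hasFDerivWithin_le
        (fun z _ => (hF z).hasFDerivWithinAt) (fun z _ => by simpa using hD z)
        (Set.mem_univ _) (Set.mem_univ _)
    rw [sub_zero] at h1
    have h2 : ‖F x - c‖ ≤ ‖F x - F 0‖ + ‖F 0 - c‖ := norm_sub_le_norm_sub_add_norm_sub _ _ _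
    have h3 : ‖x‖ ^ k ≤ 1 := pow_le_one₀ (norm_nonneg x) hx
    nlinarith [norm_nonneg (F x - c)]
  · refine le_max_of_le_left ?_
    have hx0 : x ≠ 0 := norm_pos_iff.1 (by linarith)
    refine le_trans ?_ (hc x hx0 ▸ hC x hx0)
    gcongr
    omega

/-- A closed Schwartz 1-form on a space of dimension at least two has a Schwartz primitive. -/
lemma exists_schwartz_primitive_s13 (hE : 1 < Module.rank ℝ E) (ω : 𝓢(E, E →L[ℝ] ℝ))
    (hω : ∀ a x y, fderiv ℝ ω a x y = fderiv ℝ ω a y x) :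
    ∃ f : 𝓢(E, ℝ), ∀ x, HasFDerivAt f (ω x) x := by
  obtain ⟨F, hF⟩ := convex_univ.exists_forall_hasFDerivAt_of_fderiv_symmetric isOpen_univ
    ω.differentiable.differentiableOn (fun a _ => hω a)
  replace hF : ∀ x, HasFDerivAt F (ω x) x := fun x => hF x trivial
  obtain ⟨c, hc⟩ := exists_const_decay hE hF
  have hG : ∀ x, HasFDerivAt (fun x => F x - c) (ω x) x := fun x => (hF x).sub_const c
  have hfd : fderiv ℝ (fun x => F x - c) = ω := funext fun x => (hG x).fderiv
  refine ⟨⟨fun x => F x - c, ?_, fun k n => ?_⟩, hG⟩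
  · rw [contDiff_infty_iff_fderiv, hfd]
    exact ⟨fun x => (hG x).differentiableAt, ω.smooth'⟩
  · rcases n with _ | n
    · simpa using hc k
    · obtain ⟨C, hC⟩ := ω.decay' k n
      refine ⟨C, fun x => ?_⟩
      rw [← norm_iteratedFDeriv_fderiv, hfd]
      exact hC x

end Primitive

/-- **Schwartz Poincaré lemma for `ℝⁿ`, `n ≥ 2`.**  Let `g₁, …, g_n ∈ 𝒮(ℝⁿ)` satisfy
`∂_j g_i = ∂_i g_j` for all `i, j` (i.e. the 1-form `Σ gᵢ dxᵢ` is closed).  Then there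
is a Schwartz function `f ∈ 𝒮(ℝⁿ)` with `∂_i f = g_i` for all `i`.  (This expresses
the vanishing of the first de Rham cohomology with Schwartz coefficients of `ℝⁿ` for
`n ≥ 2`, equivalently the vanishing of the Lie algebra homology `H_{n-1}` of the
translation module `𝒮(ℝⁿ)`.) -/
theorem schwartz_poincare_lemma (n : ℕ) (hn : 2 ≤ n)
    (g : Fin n → SchwartzMap (Fin n → ℝ) ℝ)
    (hclosed : ∀ (i j : Fin n) (x : Fin n → ℝ),
      fderiv ℝ (g i) x (Pi.single j 1) = fderiv ℝ (g j) x (Pi.single i 1)) :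
    ∃ f : SchwartzMap (Fin n → ℝ) ℝ,
      ∀ (i : Fin n) (x : Fin n → ℝ), fderiv ℝ f x (Pi.single i 1) = g i x := by
  let dx : Fin n → ((Fin n → ℝ) →L[ℝ] ℝ) := fun i => ContinuousLinearMap.proj i
  let ω : 𝓢(Fin n → ℝ, (Fin n → ℝ) →L[ℝ] ℝ) :=
    ∑ i, (g i).postcompCLM (ContinuousLinearMap.toSpanSingleton ℝ (dx i))
  have hω : ∀ x, ω x = ∑ i, g i x • dx i := fun x => by
    simp [ω]
  have hdω : ∀ a, HasFDerivAt ω (∑ i, (fderiv ℝ (g i) a).smulRight (dx i)) a := fun a => by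
    rw [show (ω : (Fin n → ℝ) → _) = fun x => ∑ i, g i x • dx i from funext hω]
    exact HasFDerivAt.fun_sum fun i _ => (g i).differentiableAt.hasFDerivAt.smul_const (dx i)
  obtain ⟨f, hf⟩ := exists_schwartz_primitive_s13 (by simpa using Nat.lt_of_succ_le hn) ω (by
    intro a x y
    have hexp : ∀ (i : Fin n) (v : Fin n → ℝ),
        fderiv ℝ (g i) a v = ∑ j, v j * fderiv ℝ (g i) a (Pi.single j 1) := fun i v => by
      conv_lhs => rw [pi_eq_sum_univ' v]
      simp
    have hval : ∀ u v : Fin n → ℝ, fderiv ℝ ω a u v =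
        ∑ i, ∑ j, u j * fderiv ℝ (g i) a (Pi.single j 1) * v i := fun u v => by
      rw [(hdω a).fderiv]
      simp only [sum_apply, ContinuousLinearMap.smulRight_apply,
        smul_apply, smul_eq_mul, hexp _ u, Finset.sum_mul, dx,
        ContinuousLinearMap.proj_apply]
    rw [hval, hval, Finset.sum_comm]
    refine Finset.sum_congr rfl fun i _ => Finset.sum_congr rfl fun j _ => ?_
    rw [hclosed j i]
    ring)
  refine ⟨f, fun i x => ?_⟩
  rw [(hf x).fderiv, hω]
  simp [dx, Pi.single_apply]
end
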